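/- arXiv:0710.2767 — 5 statements merged into one kernel-verified Lean document; each statement's English description precedes it below -/
import Mathlib

section
/- Assume p ∤ (m/t), d | h, and a = 0. Then M_t = (q−1) · Σ_{x ∈ F_{q^t}^*} e_t(γ_t^{i_0}·x^l) = (q−1) · Σ_{λ ∈ H_l} G_t(λ̄) · λ(g^{i_0}), where l = gcd(t, s/d). -/
noncomputable section

open Complex Polynomial Classical

/-- The canonical additive character `x ↦ exp(2πi·tr(x)/p)` of a finite field `E`
of characteristic `p` (the prime field being `ZMod p`). -/
def eChar (p : ℕ) (E : Type*) [Field E] [Fintype E] [Algebra (ZMod p) E] (x : E) : ℂ :=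
  Complex.exp (2 * Real.pi * Complex.I * ((Algebra.trace (ZMod p) E x).val : ℂ) / (p : ℂ))

/-- The Gauss sum `G_t(λ) = Σ_{x ∈ E^*} e_t(x)·λ(N_{E/F}(x))` over `E`, for a
multiplicative character `λ` of `F`. -/
def gaussSumN (p : ℕ) (F E : Type*) [Field F] [Fintype F] [Field E] [Fintype E]
    [Algebra F E] [Algebra (ZMod p) E] (lam : MulChar F ℂ) : ℂ :=
  ∑ x : Eˣ, eChar p E (x : E) * lam (Algebra.norm F (x : E))

/-- `M_t = Σ_{c∈F^*} e_1(−(t/m)·c·a)·Σ_{x∈E^*} e_t(c·γ^{i_0}·x^{s/d})`, where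
`mt = m/t`, `sd = s/d` and `(t/m)` is the inverse of `m/t` in the prime field. -/
def MM (p : ℕ) (F E : Type*) [Field F] [Fintype F] [Field E] [Fintype E]
    [Algebra F E] [Algebra (ZMod p) F] [Algebra (ZMod p) E]
    (γ : E) (a : F) (mt sd i0 : ℕ) : ℂ :=
  ∑ c : Fˣ, eChar p F (-(((mt : F))⁻¹ * c * a)) *
    ∑ x : Eˣ, eChar p E (algebraMap F E (c : F) * γ ^ i0 * (x : E) ^ sd)

theorem aux_avg {A B G : Type*} [Group A] [Group B] [CommGroup G] [Fintype A] [Fintype B]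
    (φ : A →* G) (ψ : B →* G) (h : φ.range = ψ.range) (f : G → ℂ) :
    (Fintype.card B : ℂ) * ∑ a, f (φ a) = (Fintype.card A : ℂ) * ∑ b, f (ψ b) := by
  have h1 : ∑ a : A, ∑ b : B, f (φ a * ψ b) = (Fintype.card A : ℂ) * ∑ b, f (ψ b) := by
    have : ∀ a : A, ∑ b : B, f (φ a * ψ b) = ∑ b, f (ψ b) := by
      intro a
      have ha : φ a ∈ ψ.range := h ▸ ⟨a, rfl⟩
      obtain ⟨b', hb'⟩ := ha
      rw [← hb']
      simp_rw [← map_mul]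
      exact Fintype.sum_equiv (Equiv.mulLeft b') _ _ (fun b => rfl)
    simp [this]
  have h2 : ∑ b : B, ∑ a : A, f (φ a * ψ b) = (Fintype.card B : ℂ) * ∑ a, f (φ a) := by
    have : ∀ b : B, ∑ a : A, f (φ a * ψ b) = ∑ a, f (φ a) := by
      intro b
      have hb : ψ b ∈ φ.range := h ▸ ⟨b, rfl⟩
      obtain ⟨a', ha'⟩ := hb
      rw [← ha']
      simp_rw [← map_mul]
      exact Fintype.sum_equiv (Equiv.mulRight a') _ _ (fun b => rfl)
    simp [this]
  rw [← h1, ← h2, Finset.sum_comm]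

theorem aux_card {G : Type*} [CommGroup G] [IsCyclic G] [Fintype G] (l : ℕ)
    (hl : l ∣ Nat.card G) : (Finset.univ.filter (fun x : G => x ^ l = 1)).card = l := by
  have h := IsCyclic.card_powMonoidHom_ker (G := G) l
  rw [Nat.gcd_eq_right hl] at h
  refine Eq.trans ?_ h
  rw [Nat.card_eq_fintype_card, Fintype.card_subtype]
  congr 1
  ext x
  simp [MonoidHom.mem_ker]

theorem aux_orth {F : Type*} [Field F] [Fintype F] [Fintype (MulChar F ℂ)] (l : ℕ)
    (hl : l ∣ Fintype.card F - 1)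
    (g : Fˣ) (hg : ∀ u : Fˣ, u ∈ Subgroup.zpowers g) (u : Fˣ) :
    ∑ lam ∈ Finset.univ.filter (fun lam : MulChar F ℂ => lam ^ l = 1), lam (u : F) =
      if ∃ v : Fˣ, u = v ^ l then (l : ℂ) else 0 := by
  have hcF : 0 < Fintype.card F - 1 := Nat.sub_pos_of_lt Fintype.one_lt_card
  have hl0 : l ≠ 0 := by rintro rfl; simp at hl; omega
  split_ifs with hu
  · obtain ⟨v, rfl⟩ := hu
    have hone : ∀ lam ∈ Finset.univ.filter (fun lam : MulChar F ℂ => lam ^ l = 1),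
        lam ((v ^ l : Fˣ) : F) = 1 := by
      intro lam hlam
      simp only [Finset.mem_filter, Finset.mem_univ, true_and] at hlam
      rw [Units.val_pow_eq_pow_val, map_pow, ← MulChar.pow_apply_coe, hlam, MulChar.one_apply_coe]
    rw [Finset.sum_congr rfl hone]
    simp only [Finset.sum_const, nsmul_eq_mul, mul_one]
    obtain ⟨e⟩ := MulChar.mulEquiv_units F ℂ
    have : IsCyclic (MulChar F ℂ) := isCyclic_of_injective e.toMonoidHom e.injective
    have hc := aux_card (G := MulChar F ℂ) l ?_
    · norm_cast
      convert hc
    rw [Nat.card_congr e.toEquiv, Nat.card_eq_fintype_card, Fintype.card_units]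
    exact hl
  · obtain ⟨χ, hχ⟩ := MulChar.exists_mulChar_orderOf F hl (Complex.isPrimitiveRoot_exp l hl0)
    have hχl : χ ^ l = 1 := by rw [← hχ]; exact pow_orderOf_eq_one χ
    have hχu : χ u ≠ 1 := by
      intro h1
      apply hu
      obtain ⟨j, rfl⟩ := Subgroup.mem_zpowers_iff.mp (hg u)
      have hj : χ ^ j = 1 := by
        rw [MulChar.eq_iff hg]
        rw [MulChar.one_apply_coe, ← h1]
        have : ∀ j : ℤ, (χ ^ j) (g : F) = χ ((g ^ j : Fˣ) : F) := by
          intro j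
          have hh : (MulChar.mulEquivToUnitHom (χ ^ j)) g = MulChar.mulEquivToUnitHom χ (g ^ j) := by
            rw [map_zpow, map_zpow]; rfl
          exact congrArg Units.val hh
        exact this j
      have := orderOf_dvd_iff_zpow_eq_one.mpr hj
      rw [hχ] at this
      obtain ⟨k, rfl⟩ := this
      exact ⟨g ^ k, by rw [mul_comm, zpow_mul, zpow_natCast]⟩
    have hS : χ u * ∑ lam ∈ Finset.univ.filter (fun lam : MulChar F ℂ => lam ^ l = 1), lam (u : F)
        = ∑ lam ∈ Finset.univ.filter (fun lam : MulChar F ℂ => lam ^ l = 1), lam (u : F) := by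
      rw [Finset.mul_sum]
      refine Finset.sum_equiv (Equiv.mulLeft χ) ?_ ?_
      · intro lam; simp [mul_pow, hχl]
      · intro lam _; simp [MulChar.mul_apply]
    by_contra hne
    exact hχu (mul_right_cancel₀ hne (by rw [hS, one_mul]))

theorem aux_fiber {G : Type*} [CommGroup G] [IsCyclic G] [Fintype G] (l : ℕ)
    (hl : l ∣ Nat.card G) (f : G → ℂ) :
    ∑ x : G, f (x ^ l) = ∑ y : G, f y * (if ∃ v : G, y = v ^ l then (l : ℂ) else 0) := by
  rw [← Finset.sum_fiberwise (s := Finset.univ) (g := fun x : G => x ^ l)]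
  refine Finset.sum_congr rfl fun y _ => ?_
  have h1 : ∀ x ∈ Finset.univ.filter (fun x : G => x ^ l = y), f (x ^ l) = f y := by
    intro x hx
    rw [(Finset.mem_filter.mp hx).2]
  rw [Finset.sum_congr rfl h1, Finset.sum_const, nsmul_eq_mul, mul_comm]
  congr 1
  split_ifs with h
  · obtain ⟨v, rfl⟩ := h
    have := MonoidHom.card_fiber_eq_of_mem_range (powMonoidHom l : G →* G) (x := v ^ l) (y := 1)
      ⟨v, rfl⟩ ⟨1, by simp⟩
    have h2 := aux_card (G := G) l hl
    simp only [powMonoidHom_apply] at this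
    rw [this, h2]
  · rw [Finset.filter_false_of_mem]
    · simp
    · intro x _ hx
      exact h ⟨x, hx.symm⟩

theorem aux_range {F E : Type*} [Field F] [Field E] [Algebra F E] (n l S : ℕ)
    (hl : l = Nat.gcd S n) (g : Fˣ) (hg : ∀ u : Fˣ, u ∈ Subgroup.zpowers g)
    (γ : Eˣ) (hγ : ∀ u : Eˣ, u ∈ Subgroup.zpowers γ)
    (hS : Units.map (algebraMap F E : F →* E) g = γ ^ S) :
    (MonoidHom.coprod (Units.map (algebraMap F E : F →* E)) (powMonoidHom n : Eˣ →* Eˣ)).range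
      = (powMonoidHom l : Eˣ →* Eˣ).range := by
  ext y
  simp only [MonoidHom.mem_range, MonoidHom.coprod_apply, powMonoidHom_apply, Prod.exists]
  constructor
  · rintro ⟨c, x, rfl⟩
    obtain ⟨k, rfl⟩ := Subgroup.mem_zpowers_iff.mp (hg c)
    obtain ⟨S', hS'⟩ : l ∣ S := hl ▸ Nat.gcd_dvd_left _ _
    obtain ⟨n', hn'⟩ : l ∣ n := hl ▸ Nat.gcd_dvd_right _ _
    refine ⟨γ ^ (S' * k) * x ^ n', ?_⟩
    rw [map_zpow, hS, mul_pow, ← pow_mul, mul_comm n', ← hn', hS', ← zpow_natCast (γ ^ _) l,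
      ← zpow_natCast γ (l * S'), ← zpow_mul, ← zpow_mul]
    congr 2
    push_cast
    ring
  · rintro ⟨x, rfl⟩
    obtain ⟨k, rfl⟩ := Subgroup.mem_zpowers_iff.mp (hγ x)
    refine ⟨g ^ (Nat.gcdA S n * k), γ ^ (Nat.gcdB S n * k), ?_⟩
    rw [map_zpow, hS, ← zpow_natCast, ← zpow_natCast, ← zpow_natCast, ← zpow_mul, ← zpow_mul,
      ← zpow_mul, ← zpow_add, hl, Nat.gcd_eq_gcd_ab]
    congr 1
    ring

theorem aux_gcd (q t n : ℕ) (hq : 1 ≤ q) (hn : n ∣ q - 1) :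
    Nat.gcd (∑ i ∈ Finset.range t, q ^ i) n = Nat.gcd t n := by
  have h1 : q ≡ 1 [MOD n] := ((Nat.modEq_iff_dvd' hq).mpr hn).symm
  have : (∑ i ∈ Finset.range t, q ^ i) ≡ t [MOD n] := by
    induction t with
    | zero => simp; rfl
    | succ t ih =>
      rw [Finset.sum_range_succ]
      exact ih.add (by simpa using h1.pow t)
  exact this.gcd_eq


/-- If `p ∤ m/t`, `d ∣ h` and `a = 0` then
`M_t = (q−1)·Σ_{x∈E^*} e_t(γ^{i_0}·x^l) = (q−1)·Σ_{λ∈H_l} G_t(λ̄)·λ(g^{i_0})`,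
where `l = gcd(t, s/d)`. -/
theorem stmt4 (p r m s h t d l i0 : ℕ) [Fact p.Prime] (hr : 0 < r) (hm : 2 ≤ m)
    (ht : t ∣ m) (ht0 : 0 < t)
    (F E : Type*) [Field F] [Fintype F] [Field E] [Fintype E]
    [Algebra F E] [Algebra (ZMod p) F] [Algebra (ZMod p) E]
    (hF : Fintype.card F = p ^ r) (hE : Fintype.card E = Fintype.card F ^ t)
    (g : Fˣ) (hg : ∀ u : Fˣ, u ∈ Subgroup.zpowers g)
    (γ : Eˣ) (hγ : ∀ u : Eˣ, u ∈ Subgroup.zpowers γ)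
    (hγg : Algebra.norm F ((γ : Eˣ) : E) = (g : F))
    (hs : 0 < s) (hsq : s ∣ Fintype.card F - 1) (hh : h < s)
    (hd : d = Nat.gcd (m / t) s) (hl : l = Nat.gcd t (s / d))
    (hpmt : ¬ p ∣ m / t) (hdh : d ∣ h)
    (hi0 : i0 < s / d ∧ (m / (d * t)) * i0 ≡ h / d [MOD s / d])
    (a : F) (ha : a = 0) :
    MM p F E ((γ : Eˣ) : E) a (m / t) (s / d) i0 =
      ((Fintype.card F : ℂ) - 1) *
        ∑ x : Eˣ, eChar p E (((γ : Eˣ) : E) ^ i0 * (x : E) ^ l) ∧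
    MM p F E ((γ : Eˣ) : E) a (m / t) (s / d) i0 =
      ((Fintype.card F : ℂ) - 1) *
        ∑ᶠ (lam : MulChar F ℂ) (_ : lam ^ l = 1),
          gaussSumN p F E lam⁻¹ * lam ((g : F) ^ i0) := by
  subst ha
  set n := s / d with hn
  have hds : d ∣ s := hd ▸ Nat.gcd_dvd_right _ _
  have hnq : n ∣ Fintype.card F - 1 := (Nat.div_dvd_of_dvd hds).trans hsq
  have hlq : l ∣ Fintype.card F - 1 := (hl ▸ Nat.gcd_dvd_right _ _ : l ∣ n).trans hnq
  have hq1 : 1 ≤ Fintype.card F := Fintype.card_pos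
  have hcE : (Fintype.card Eˣ : ℂ) ≠ 0 := by exact_mod_cast Fintype.card_ne_zero
  have hcF : (Fintype.card Fˣ : ℂ) = (Fintype.card F : ℂ) - 1 := by
    rw [Fintype.card_units, Nat.cast_sub hq1, Nat.cast_one]
  have hlE : l ∣ Nat.card Eˣ := by
    rw [Nat.card_eq_fintype_card, Fintype.card_units, hE]
    exact hlq.trans (by simpa using Nat.sub_dvd_pow_sub_pow (Fintype.card F) 1 t)
  have hfr : Module.finrank F E = t := by
    have h1 := Module.card_eq_pow_finrank (K := F) (V := E)
    rw [hE] at h1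
    exact (Nat.pow_right_injective (Fintype.one_lt_card (α := F)) h1).symm
  have hS : Units.map (algebraMap F E : F →* E) g =
      γ ^ (∑ i ∈ Finset.range t, Fintype.card F ^ i) := by
    ext
    have h1 := FiniteField.algebraMap_norm_eq_pow_sum F E (γ : E)
    rw [hγg, hfr, Nat.card_eq_fintype_card] at h1
    simpa using h1
  have hrange := aux_range n l _ (by rw [hl, aux_gcd _ t n hq1 hnq]) g hg γ hγ hS
  have havg := aux_avg _ _ hrange (fun u : Eˣ => eChar p E ((γ : E) ^ i0 * (u : E)))
  have key : MM p F E ((γ : Eˣ) : E) 0 (m / t) n i0 =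
      ((Fintype.card F : ℂ) - 1) *
        ∑ x : Eˣ, eChar p E (((γ : Eˣ) : E) ^ i0 * (x : E) ^ l) := by
    have h0 : eChar p F 0 = 1 := by simp [eChar]
    apply mul_left_cancel₀ hcE
    rw [Fintype.card_prod, Nat.cast_mul, Fintype.sum_prod_type] at havg
    unfold MM
    simp only [mul_zero, neg_zero, h0, one_mul]
    rw [← hcF]
    simp only [MonoidHom.coprod_apply, powMonoidHom_apply, Units.val_mul, Units.coe_map,
      Units.val_pow_eq_pow_val, MonoidHom.coe_coe] at havg
    rw [← mul_assoc, mul_comm (Fintype.card Eˣ : ℂ) (Fintype.card Fˣ : ℂ), ← havg]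
    congr 1
    refine Finset.sum_congr rfl fun c _ => Finset.sum_congr rfl fun x _ => ?_
    congr 1
    ring
  refine ⟨key, ?_⟩
  rw [key]
  congr 1
  have : Fintype (MulChar F ℂ) := Fintype.ofFinite _
  have hfin : ∑ᶠ (lam : MulChar F ℂ) (_ : lam ^ l = 1),
      gaussSumN p F E lam⁻¹ * lam ((g : F) ^ i0) =
      ∑ lam ∈ Finset.univ.filter (fun lam : MulChar F ℂ => lam ^ l = 1),
        gaussSumN p F E lam⁻¹ * lam ((g : F) ^ i0) := by
    rw [← finsum_mem_finset_eq_sum]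
    simp
  rw [hfin]
  have hterm : ∀ lam : MulChar F ℂ, gaussSumN p F E lam⁻¹ * lam ((g : F) ^ i0) =
      ∑ y : Eˣ, eChar p E ((γ : E) ^ i0 * (y : E)) *
        lam (((Units.map (Algebra.norm F : E →* F) y)⁻¹ : Fˣ) : F) := by
    intro lam
    unfold gaussSumN
    rw [Finset.sum_mul]
    refine (Fintype.sum_equiv (Equiv.mulLeft (γ ^ i0)) _ _ fun y => ?_).symm
    simp only [Equiv.coe_mulLeft, Units.val_mul, Units.val_pow_eq_pow_val, map_mul, map_pow, hγg]
    rw [mul_assoc]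
    congr 1
    have hy : Algebra.norm F (y : E) = ((Units.map (Algebra.norm F : E →* F) y : Fˣ) : F) := rfl
    have hgu : lam⁻¹ (g : F) * lam (g : F) = 1 := by
      rw [← MulChar.mul_apply, inv_mul_cancel, MulChar.one_apply_coe]
    rw [hy, MulChar.inv_apply' lam ((Units.map (Algebra.norm F : E →* F) y : Fˣ) : F),
      mul_right_comm, ← mul_pow, hgu, one_pow, one_mul, Units.val_inv_eq_inv_val]
  simp_rw [hterm]
  rw [Finset.sum_comm]
  simp_rw [← Finset.mul_sum, aux_orth l hlq g hg]
  have hfib := aux_fiber l hlE (fun u : Eˣ => eChar p E ((γ : E) ^ i0 * (u : E)))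
  simp only [Units.val_pow_eq_pow_val] at hfib
  rw [hfib]
  refine Finset.sum_congr rfl fun y _ => ?_
  congr 1
  have hiff : (∃ v : Eˣ, y = v ^ l) ↔
      ∃ v : Fˣ, (Units.map (Algebra.norm F : E →* F) y)⁻¹ = v ^ l := by
    constructor
    · rintro ⟨v, rfl⟩
      exact ⟨(Units.map (Algebra.norm F : E →* F) v)⁻¹, by rw [map_pow, inv_pow]⟩
    · rintro ⟨v, hv⟩
      obtain ⟨j, rfl⟩ := Subgroup.mem_zpowers_iff.mp (hγ y)
      obtain ⟨k, rfl⟩ := Subgroup.mem_zpowers_iff.mp (hg v)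
      have hN : Units.map (Algebra.norm F : E →* F) γ = g := Units.ext hγg
      rw [map_zpow, hN, ← zpow_natCast, ← zpow_mul, inv_eq_iff_mul_eq_one, ← zpow_add] at hv
      have h1 := orderOf_dvd_iff_zpow_eq_one.mpr hv
      rw [orderOf_eq_card_of_forall_mem_zpowers hg, Nat.card_eq_fintype_card,
        Fintype.card_units] at h1
      have h2 : (l : ℤ) ∣ j + k * l := (Int.natCast_dvd_natCast.mpr hlq).trans h1
      obtain ⟨w, rfl⟩ : (l : ℤ) ∣ j := (Int.dvd_add_left (Dvd.intro_left k rfl)).mp h2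
      exact ⟨γ ^ w, by rw [mul_comm, zpow_mul, zpow_natCast]⟩
  simp only [hiff]


end
end

section
/- Assume p ∤ (m/t), d | h, and a = 0. Then M_t = (q−1) · ( −1 + (−1)^t · q · Σ_{λ ∈ H_l^*} J_t(λ) · λ̄(g^{i_0}) ), where l = gcd(t, s/d). -/
noncomputable section

open Complex Polynomial Classical

/-- The Jacobi sum `J_t(λ) = Σ_{x_1+⋯+x_t=1} λ(x_1⋯x_t)` (with `λ(0) = 0` for nontrivial λ). -/
def jacobiS (F : Type*) [Field F] [Fintype F] (t : ℕ) (lam : MulChar F ℂ) : ℂ :=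
  ∑ v : Fin t → F, if (∑ i, v i) = 1 then lam (∏ i, v i) else 0

namespace HD
set_option linter.unusedSectionVars false
variable {F : Type*} [Field F] [Fintype F]

lemma mon_finite (F : Type*) [Field F] [Fintype F] (n : ℕ) :
    {f : F[X] | f.Monic ∧ f.natDegree = n}.Finite := by
  apply Set.Finite.of_finite_image (f := fun f : F[X] => fun i : Fin (n+1) => f.coeff i)
  · exact Set.toFinite _
  · intro f hf f' hf' h
    ext i
    by_cases hi : i < n + 1
    · exact congrFun h ⟨i, hi⟩
    · rw [coeff_eq_zero_of_natDegree_lt (by have := hf.2; omega),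
        coeff_eq_zero_of_natDegree_lt (by have := hf'.2; omega)]

def mon (F : Type*) [Field F] [Fintype F] (n : ℕ) : Finset F[X] := (mon_finite F n).toFinset

lemma mem_mon {n : ℕ} {f : F[X]} : f ∈ mon F n ↔ f.Monic ∧ f.natDegree = n := by
  simp [mon]

def irr (F : Type*) [Field F] [Fintype F] (N : ℕ) : Finset F[X] :=
  ((Finset.range (N+1)).biUnion (mon F)).filter Irreducible

lemma mem_irr {N : ℕ} {f : F[X]} : f ∈ irr F N ↔ f.Monic ∧ f.natDegree ≤ N ∧ Irreducible f := by
  simp [irr, mem_mon]; tauto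

def phi (χ : MulChar F ℂ) (ψ : AddChar F ℂ) (f : F[X]) : ℂ :=
  χ ((-1)^f.natDegree * f.coeff 0) * ψ (-f.nextCoeff)

lemma phi_mul (χ : MulChar F ℂ) (ψ : AddChar F ℂ) {f h : F[X]} (hf : f.Monic) (hh : h.Monic) :
    phi χ ψ (f * h) = phi χ ψ f * phi χ ψ h := by
  simp only [phi]
  rw [hf.natDegree_mul hh, hf.nextCoeff_mul hh, mul_coeff_zero, neg_add, AddChar.map_add_eq_mul,
    pow_add, mul_mul_mul_comm, map_mul]
  ring

lemma phi_one (χ : MulChar F ℂ) (ψ : AddChar F ℂ) : phi χ ψ (1 : F[X]) = 1 := by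
  simp [phi, nextCoeff]

lemma phi_pow (χ : MulChar F ℂ) (ψ : AddChar F ℂ) {f : F[X]} (hf : f.Monic) (k : ℕ) :
    phi χ ψ (f ^ k) = phi χ ψ f ^ k := by
  induction k with
  | zero => simp [phi_one]
  | succ k ih => rw [pow_succ, phi_mul _ _ (hf.pow k) hf, ih, pow_succ]

def A (χ : MulChar F ℂ) (ψ : AddChar F ℂ) (n : ℕ) : ℂ := ∑ f ∈ mon F n, phi χ ψ f

def S (χ : MulChar F ℂ) (ψ : AddChar F ℂ) (N j : ℕ) : ℂ :=
  ∑ P ∈ irr F N, ∑ k ∈ Finset.Icc 1 N, if k * P.natDegree = j then P.natDegree * phi χ ψ P ^ k else 0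

lemma A_zero (χ : MulChar F ℂ) (ψ : AddChar F ℂ) : A χ ψ 0 = 1 := by
  have : mon F 0 = {1} := by
    ext f
    rw [mem_mon, Finset.mem_singleton]
    constructor
    · rintro ⟨h1, h2⟩; exact h1.natDegree_eq_zero.mp h2
    · rintro rfl; simp
  simp [A, this, phi_one]

lemma A_one (χ : MulChar F ℂ) (ψ : AddChar F ℂ) : A χ ψ 1 = gaussSum χ ψ := by
  symm
  unfold A gaussSum
  refine Finset.sum_bij (fun a _ => X - C a) ?_ ?_ ?_ ?_
  · intro a _; simp [mem_mon, monic_X_sub_C]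
  · intro a _ b _ h; simpa using h
  · intro f hf
    rw [mem_mon] at hf
    refine ⟨-f.coeff 0, Finset.mem_univ _, ?_⟩
    have := hf.1.as_sum
    rw [hf.2] at this
    simp at this
    conv_rhs => rw [this]
    simp
  · intro a _
    simp [phi]

lemma A_two (χ : MulChar F ℂ) {ψ : AddChar F ℂ} (hψ : ψ ≠ 1) {n : ℕ} (hn : 2 ≤ n) :
    A χ ψ n = 0 := by
  obtain ⟨a, ha⟩ := AddChar.ne_one_iff.mp hψ
  have key : ∀ b : F, ∀ f ∈ mon F n, f + C b * X^(n-1) ∈ mon F n := by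
    intro b f hf
    rw [mem_mon] at hf ⊢
    have hd : (C b * X^(n-1)).degree < f.degree := by
      refine (degree_C_mul_X_pow_le _ _).trans_lt ?_
      rw [degree_eq_natDegree hf.1.ne_zero, hf.2]
      exact_mod_cast by omega
    exact ⟨hf.1.add_of_left hd, by rw [natDegree_add_eq_left_of_degree_lt hd, hf.2]⟩
  have : A χ ψ n = ψ a * A χ ψ n := by
    conv_rhs => unfold A
    rw [Finset.mul_sum]
    unfold A
    refine Finset.sum_nbij' (fun f => f + C a * X^(n-1)) (fun f => f + C (-a) * X^(n-1))
      (key a) (key (-a)) ?_ ?_ ?_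
    · intro f _; simp
    · intro f _; simp
    · intro f hf
      have h1 := (mem_mon.mp hf).2
      have h2 := (mem_mon.mp (key a f hf)).2
      simp only [phi, h1, h2, nextCoeff]
      rw [if_neg (by omega), if_neg (by omega)]
      rw [coeff_add, coeff_add, coeff_C_mul_X_pow, coeff_C_mul_X_pow, if_neg (by omega), if_pos rfl,
        neg_add, AddChar.map_add_eq_mul, add_zero, AddChar.map_neg_eq_inv ψ a]
      have : ψ a ≠ 0 := (ψ.val_isUnit a).ne_zero
      field_simp
  have h : (1 - ψ a) * A χ ψ n = 0 := by linear_combination this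
  rcases mul_eq_zero.mp h with h | h
  · exact absurd (by linear_combination -h) ha
  · exact h

lemma pow_dvd_iff_count {P f : F[X]} (hP : P.Monic) (hPi : Irreducible P) (hf : f ≠ 0) (k : ℕ) :
    P ^ k ∣ f ↔ k ≤ (UniqueFactorizationMonoid.normalizedFactors f).count P := by
  rw [pow_dvd_iff_le_emultiplicity,
    UniqueFactorizationMonoid.emultiplicity_eq_count_normalizedFactors hPi hf,
    hP.normalize_eq_self]
  norm_cast

lemma degree_identity {N n : ℕ} (hn : n ≤ N) {f : F[X]} (hf : f ∈ mon F n) :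
    ∑ P ∈ irr F N, ∑ k ∈ Finset.Icc 1 N, (if P ^ k ∣ f then P.natDegree else 0) = n := by
  obtain ⟨hm, hd⟩ := mem_mon.mp hf
  have h1 : ∀ P ∈ irr F N, ∑ k ∈ Finset.Icc 1 N, (if P ^ k ∣ f then P.natDegree else 0) =
      (UniqueFactorizationMonoid.normalizedFactors f).count P * P.natDegree := by
    intro P hP
    obtain ⟨hPm, hPd, hPi⟩ := mem_irr.mp hP
    simp only [pow_dvd_iff_count hPm hPi hm.ne_zero]
    rw [← Finset.sum_filter, Finset.sum_const, smul_eq_mul]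
    congr 1
    have hc : (UniqueFactorizationMonoid.normalizedFactors f).count P ≤ N := by
      have := (pow_dvd_iff_count hPm hPi hm.ne_zero _).mpr le_rfl
      have := natDegree_le_of_dvd this hm.ne_zero
      rw [natDegree_pow] at this
      have h0 := hPi.natDegree_pos
      nlinarith
    have : (Finset.Icc 1 N).filter
        (fun k => k ≤ (UniqueFactorizationMonoid.normalizedFactors f).count P) =
        Finset.Icc 1 ((UniqueFactorizationMonoid.normalizedFactors f).count P) := by
      ext k; simp; omega
    rw [this]; simp
  rw [Finset.sum_congr rfl h1]
  have hmon : ∀ P ∈ UniqueFactorizationMonoid.normalizedFactors f, P.Monic := fun P hP =>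
    ((Polynomial.mem_normalizedFactors_iff hm.ne_zero).mp hP).2.1
  have h2 : f.natDegree = ((UniqueFactorizationMonoid.normalizedFactors f).map natDegree).sum := by
    rw [← natDegree_multiset_prod_of_monic _ hmon]
    have := leadingCoeff_mul_prod_normalizedFactors f
    rw [hm.leadingCoeff] at this
    conv_lhs => rw [← this]
    simp
  rw [← hd, h2, Finset.sum_multiset_map_count]
  symm
  apply Finset.sum_subset
  · intro P hP
    rw [Multiset.mem_toFinset, Polynomial.mem_normalizedFactors_iff hm.ne_zero] at hP
    rw [mem_irr]
    refine ⟨hP.2.1, ?_, hP.1⟩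
    have := natDegree_le_of_dvd hP.2.2 hm.ne_zero
    omega
  · intro P _ hP
    rw [Multiset.mem_toFinset] at hP
    simp [Multiset.count_eq_zero_of_notMem hP]

lemma recursion (χ : MulChar F ℂ) (ψ : AddChar F ℂ) {N n : ℕ} (hn : n ≤ N) :
    (n : ℂ) * A χ ψ n = ∑ j ∈ Finset.Icc 1 n, S χ ψ N j * A χ ψ (n - j) := by
  have h1 : ∀ P ∈ irr F N, ∀ k ∈ Finset.Icc 1 N,
      ∑ j ∈ Finset.Icc 1 n, (if k * P.natDegree = j then P.natDegree * phi χ ψ P ^ k else 0) *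
        A χ ψ (n - j) = ∑ f ∈ mon F n, phi χ ψ f * ((if P ^ k ∣ f then P.natDegree else 0 : ℕ) : ℂ) := by
    intro P hP k hk
    obtain ⟨hPm, hPd, hPi⟩ := mem_irr.mp hP
    have hk := Finset.mem_Icc.mp hk
    have h0 := hPi.natDegree_pos
    simp only [ite_mul, zero_mul, Finset.sum_ite_eq, Nat.cast_ite, Nat.cast_zero, mul_ite, mul_zero]
    by_cases hkn : k * P.natDegree ≤ n
    · rw [if_pos (by rw [Finset.mem_Icc]; exact ⟨by nlinarith, hkn⟩), ← Finset.sum_filter]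
      unfold A
      rw [Finset.mul_sum]
      refine Finset.sum_bij (fun h _ => P ^ k * h) ?_ ?_ ?_ ?_
      · intro h hh
        obtain ⟨ha, hb⟩ := mem_mon.mp hh
        rw [Finset.mem_filter, mem_mon]
        refine ⟨⟨(hPm.pow k).mul ha, ?_⟩, dvd_mul_right _ _⟩
        rw [(hPm.pow k).natDegree_mul ha, natDegree_pow]
        omega
      · intro a _ b _ h
        exact mul_left_cancel₀ (hPm.pow k).ne_zero h
      · intro f hf
        rw [Finset.mem_filter, mem_mon] at hf
        obtain ⟨⟨ha, hb⟩, h, rfl⟩ := hf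
        have hh := (hPm.pow k).of_mul_monic_left ha
        refine ⟨h, ?_, rfl⟩
        rw [(hPm.pow k).natDegree_mul hh, natDegree_pow] at hb
        rw [mem_mon]
        exact ⟨hh, by omega⟩
      · intro h hh
        rw [phi_mul _ _ (hPm.pow k) (mem_mon.mp hh).1, phi_pow _ _ hPm]
        ring
    · rw [if_neg (by rw [Finset.mem_Icc]; omega)]
      symm
      apply Finset.sum_eq_zero
      intro f hf
      rw [if_neg]
      intro hdv
      obtain ⟨ha, hb⟩ := mem_mon.mp hf
      have := natDegree_le_of_dvd hdv ha.ne_zero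
      rw [natDegree_pow] at this
      omega
  have h2 : ∑ j ∈ Finset.Icc 1 n, S χ ψ N j * A χ ψ (n - j) =
      ∑ P ∈ irr F N, ∑ k ∈ Finset.Icc 1 N, ∑ j ∈ Finset.Icc 1 n,
      (if k * P.natDegree = j then P.natDegree * phi χ ψ P ^ k else 0) * A χ ψ (n - j) := by
    simp only [S, Finset.sum_mul]
    rw [Finset.sum_comm]
    refine Finset.sum_congr rfl fun P _ => ?_
    rw [Finset.sum_comm]
  rw [h2, Finset.sum_congr rfl fun P hP => Finset.sum_congr rfl fun k hk => h1 P hP k hk]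
  have h3 : ∑ P ∈ irr F N, ∑ k ∈ Finset.Icc 1 N, ∑ f ∈ mon F n,
      phi χ ψ f * ((if P ^ k ∣ f then P.natDegree else 0 : ℕ) : ℂ) =
      ∑ f ∈ mon F n, phi χ ψ f * ((∑ P ∈ irr F N, ∑ k ∈ Finset.Icc 1 N,
        (if P ^ k ∣ f then P.natDegree else 0) : ℕ) : ℂ) := by
    push_cast
    simp only [Finset.mul_sum]
    rw [Finset.sum_comm]
    rw [Finset.sum_congr rfl fun k hk => Finset.sum_comm]
    rw [Finset.sum_comm]
    refine Finset.sum_congr rfl fun f _ => ?_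
    rw [Finset.sum_comm]
  rw [h3, Finset.sum_congr rfl fun f hf => by rw [degree_identity hn hf], ← Finset.sum_mul, A,
    mul_comm]

lemma S_eq (χ : MulChar F ℂ) {ψ : AddChar F ℂ} (hψ : ψ ≠ 1) {N : ℕ} (n : ℕ) (hn : n + 1 ≤ N) :
    S χ ψ N (n + 1) = (-1) ^ n * gaussSum χ ψ ^ (n + 1) := by
  induction n with
  | zero =>
    have := recursion χ ψ hn
    simp [A_zero, A_one] at this
    simp [← this]
  | succ n ih =>
    have ih := ih (by omega)
    have := recursion χ ψ hn
    rw [A_two χ hψ (by omega), mul_zero, Finset.sum_Icc_succ_top (by omega),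
      Finset.sum_Icc_succ_top (by omega), Finset.sum_eq_zero] at this
    · rw [Nat.sub_self, A_zero, show n + 1 + 1 - (n + 1) = 1 by omega, A_one, ih] at this
      rw [pow_succ, pow_succ (gaussSum χ ψ)]
      linear_combination -this
    · intro j hj
      rw [Finset.mem_Icc] at hj
      rw [A_two χ hψ (by omega), mul_zero]

end HD

namespace HD
set_option linter.unusedSectionVars false
variable {F : Type*} [Field F] [Fintype F] {E : Type*} [Field E] [Fintype E] [Algebra F E]

lemma phi_minpoly (χ : MulChar F ℂ) (ψ : AddChar F ℂ) {t : ℕ} (hE : Module.finrank F E = t)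
    (x : E) : ∃ k, k * (minpoly F x).natDegree = t ∧
      χ (Algebra.norm F x) * ψ (Algebra.trace F E x) = phi χ ψ (minpoly F x) ^ k := by
  have hx : IsIntegral F x := .of_finite F x
  have hf := IntermediateField.adjoin.finrank hx
  refine ⟨Module.finrank (IntermediateField.adjoin F {x}) E, ?_, ?_⟩
  · rw [← hf, mul_comm, Module.finrank_mul_finrank, hE]
  · have hn : Algebra.norm F (IntermediateField.AdjoinSimple.gen F x) =
        (-1)^(minpoly F x).natDegree * (minpoly F x).coeff 0 := by
      have := Algebra.PowerBasis.norm_gen_eq_coeff_zero_minpoly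
        (IntermediateField.adjoin.powerBasis hx)
      simpa [IntermediateField.minpoly_gen F x] using this
    rw [Algebra.norm_eq_norm_adjoin, trace_eq_trace_adjoin, trace_adjoinSimpleGen hx, hn, phi,
      map_pow, AddChar.map_nsmul_eq_pow, mul_pow]

lemma card_fiber {t : ℕ} (ht0 : 0 < t) (hE : Fintype.card E = Fintype.card F ^ t)
    {P : F[X]} (hP : P.Monic) (hPi : Irreducible P) (hd : P.natDegree ∣ t) :
    (Finset.univ.filter fun x : E => minpoly F x = P).card = P.natDegree := by
  have hs : Splits (P.map (algebraMap F E)) := by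
    have h1 := (hPi.natDegree_dvd_iff_dvd_X_pow_card_pow_sub_X (n := t)).mp hd
    have h2 := Polynomial.map_dvd (algebraMap F E) h1
    rw [Nat.card_eq_fintype_card, ← hE] at h2
    simp only [Polynomial.map_sub, Polynomial.map_pow, Polynomial.map_X] at h2
    refine Splits.of_dvd ?_ (FiniteField.X_pow_card_sub_X_ne_zero E Fintype.one_lt_card) h2
    rw [splits_iff_card_roots, FiniteField.roots_X_pow_card_sub_X,
      FiniteField.X_pow_card_sub_X_natDegree_eq E Fintype.one_lt_card]
    rfl
  have := card_rootSet_eq_natDegree (K := E) (PerfectField.separable_of_irreducible hPi) hs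
  rw [← this, ← Set.toFinset_card]
  congr 1
  ext x
  simp only [Finset.mem_filter, Finset.mem_univ, true_and, Set.mem_toFinset, mem_rootSet]
  constructor
  · rintro rfl
    exact ⟨hP.ne_zero, minpoly.aeval _ _⟩
  · rintro ⟨_, h⟩
    exact (minpoly.eq_of_irreducible_of_monic hPi h hP).symm

lemma finrank_eq {t : ℕ} (hE : Fintype.card E = Fintype.card F ^ t) : Module.finrank F E = t := by
  have := Module.card_eq_pow_finrank (K := F) (V := E)
  rw [hE] at this
  exact (Nat.pow_right_injective Fintype.one_lt_card this).symm

lemma hasse_davenport (χ : MulChar F ℂ) {ψ : AddChar F ℂ} (hψ : ψ ≠ 1) {t : ℕ} (ht0 : 0 < t)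
    (hE : Fintype.card E = Fintype.card F ^ t) :
    ∑ x : E, χ (Algebra.norm F x) * ψ (Algebra.trace F E x) = 
      (-1) ^ (t - 1) * gaussSum χ ψ ^ t := by
  have hfr := finrank_eq hE
  obtain ⟨n, rfl⟩ : ∃ n, t = n + 1 := ⟨t - 1, by omega⟩
  rw [Nat.add_sub_cancel, ← S_eq χ hψ n le_rfl, S]
  have hmem : ∀ x ∈ (Finset.univ : Finset E), minpoly F x ∈ irr F (n+1) := by
    intro x _
    obtain ⟨k, hk, _⟩ := phi_minpoly χ ψ hfr x
    rw [mem_irr]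
    exact ⟨minpoly.monic (.of_finite F x), Nat.le_of_dvd (by omega) ⟨k, by rw [← hk, mul_comm]⟩,
      minpoly.irreducible (.of_finite F x)⟩
  rw [← Finset.sum_fiberwise_of_maps_to hmem]
  refine Finset.sum_congr rfl fun P hP => ?_
  obtain ⟨hPm, hPd, hPi⟩ := mem_irr.mp hP
  have h0 := hPi.natDegree_pos
  by_cases hd : P.natDegree ∣ n + 1
  · obtain ⟨k, hk⟩ := hd
    have h1 : ∀ x ∈ Finset.univ.filter (fun x : E => minpoly F x = P),
        χ (Algebra.norm F x) * ψ (Algebra.trace F E x) = phi χ ψ P ^ k := by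
      intro x hx
      obtain ⟨k', hk', h⟩ := phi_minpoly χ ψ hfr x
      rw [(Finset.mem_filter.mp hx).2] at hk' h
      rw [h]
      congr 1
      rw [hk, mul_comm] at hk'
      exact Nat.eq_of_mul_eq_mul_left h0 hk'
    rw [Finset.sum_congr rfl h1, Finset.sum_const, card_fiber ht0 hE hPm hPi ⟨k, hk⟩,
      Finset.sum_eq_single k]
    · rw [if_pos (by rw [hk, mul_comm]), nsmul_eq_mul]
    · intro b _ hb
      rw [if_neg]
      intro h
      rw [hk, mul_comm] at h
      exact hb (Nat.eq_of_mul_eq_mul_left h0 h)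
    · intro h
      exfalso
      apply h
      rw [Finset.mem_Icc]
      constructor
      · rcases Nat.eq_zero_or_pos k with rfl | h
        · simp at hk
        · exact h
      · rw [hk]; nlinarith
  · rw [Finset.sum_eq_zero, Finset.sum_eq_zero]
    · intro k _
      rw [if_neg]
      intro h
      exact hd ⟨k, by rw [← h, mul_comm]⟩
    · intro x hx
      exfalso
      obtain ⟨k', hk', h⟩ := phi_minpoly χ ψ hfr x
      rw [(Finset.mem_filter.mp hx).2] at hk'
      exact hd ⟨k', by rw [← hk', mul_comm]⟩

lemma map_sum_psi (ψ : AddChar F ℂ) {ι : Type*} (s : Finset ι) (v : ι → F) :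
    ψ (∑ i ∈ s, v i) = ∏ i ∈ s, ψ (v i) := by
  induction s using Finset.induction_on with
  | empty => simp
  | insert a s ha ih => rw [Finset.sum_insert ha, Finset.prod_insert ha, AddChar.map_add_eq_mul, ih]

lemma gauss_pow (χ : MulChar F ℂ) {ψ : AddChar F ℂ} (hψ : ψ ≠ 1) (hχ : χ ≠ 1) {t : ℕ} (ht0 : 0 < t)
    (hχt : χ ^ t = 1) :
    gaussSum χ ψ ^ t = - (Fintype.card F : ℂ) *
      ∑ v : Fin t → F, if (∑ i, v i) = 1 then χ (∏ i, v i) else 0 := by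
  set J : F → ℂ := fun a => ∑ v : Fin t → F, if (∑ i, v i) = a then χ (∏ i, v i) else 0 with hJ
  change _ = - (Fintype.card F : ℂ) * J 1
  have h1 : ∀ f : F → ℂ, ∑ v : Fin t → F, χ (∏ i, v i) * f (∑ i, v i) = ∑ a, f a * J a := by
    intro f
    simp only [hJ, Finset.mul_sum]
    rw [Finset.sum_comm]
    refine Finset.sum_congr rfl fun v _ => ?_
    simp [mul_comm]
  have h2 : ∀ a : F, a ≠ 0 → J a = J 1 := by
    intro a ha
    simp only [hJ]
    symm
    refine Fintype.sum_equiv (Equiv.piCongrRight fun _ => Equiv.mulLeft₀ a ha) _ _ fun v => ?_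
    change _ = if ∑ i, a * v i = a then χ (∏ i, a * v i) else 0
    simp only [← Finset.mul_sum,
      Finset.prod_mul_distrib, Finset.prod_const, Finset.card_univ, Fintype.card_fin]
    have h3 : χ (a ^ t) = 1 := by
      rw [map_pow, ← MulChar.pow_apply' _ ht0.ne', hχt, MulChar.one_apply (Ne.isUnit ha)]
    rw [map_mul, h3, one_mul]
    congr 1
    simp [ha]
  have h3 : ∑ a, J a = 0 := by
    have := h1 (fun _ => 1)
    simp only [mul_one, one_mul] at this
    rw [← this]
    have h4 := Fintype.sum_pow χ t
    rw [MulChar.sum_eq_zero_of_ne_one hχ, zero_pow ht0.ne'] at h4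
    simp only [map_prod]
    exact h4.symm
  have h4 : gaussSum χ ψ ^ t = ∑ a, ψ a * J a := by
    rw [← h1, gaussSum, Fintype.sum_pow]
    refine Finset.sum_congr rfl fun v _ => ?_
    rw [Finset.prod_mul_distrib, map_prod, map_sum_psi]
  have h5 : ∀ f : F → ℂ, ∑ a, f a * J a = (∑ a, f a) * J 1 + f 0 * (J 0 - J 1) := by
    intro f
    rw [Finset.sum_mul, ← sub_eq_iff_eq_add', ← Finset.sum_sub_distrib, Finset.sum_eq_single 0]
    · ring
    · intro a _ ha
      rw [h2 a ha]; ring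
    · simp
  have h6 := h5 (fun _ => 1)
  simp only [one_mul, h3, Finset.sum_const, Finset.card_univ, nsmul_eq_mul, mul_one] at h6
  rw [h4, h5, AddChar.sum_eq_zero_of_ne_one hψ, AddChar.map_zero_eq_one]
  linear_combination -h6

lemma card_pow_eq {n t : ℕ} (hn0 : 0 < n) (hn : n ∣ Fintype.card F - 1)
    (hE : Fintype.card E = Fintype.card F ^ t)
    [Fintype (MulChar F ℂ)]
    (g : Fˣ) (hg : ∀ u : Fˣ, u ∈ Subgroup.zpowers g)
    (γ : Eˣ) (hγ : ∀ u : Eˣ, u ∈ Subgroup.zpowers γ)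
    (hγg : Algebra.norm F ((γ : Eˣ) : E) = (g : F)) (y : Eˣ) :
    ((Finset.univ.filter fun x : Eˣ => x ^ n = y).card : ℂ) =
      ∑ χ ∈ Finset.univ.filter (fun χ : MulChar F ℂ => χ ^ n = 1), χ (Algebra.norm F (y : E)) := by
  have hnE : n ∣ Fintype.card Eˣ := by
    rw [Fintype.card_units, hE]
    exact hn.trans (by simpa using Nat.sub_dvd_pow_sub_pow (Fintype.card F) 1 t)
  have : NeZero n := ⟨hn0.ne'⟩
  have hζ := Complex.isPrimitiveRoot_exp n hn0.ne'
  set ζ := Complex.exp (2 * Real.pi * I / n) with hζdef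
  have hζu : (hζ.isUnit hn0.ne').unit ∈ rootsOfUnity (Fintype.card Fˣ) ℂ := by
    rw [_root_.mem_rootsOfUnity]
    refine Units.ext ?_
    simp only [Units.val_pow_eq_pow_val, IsUnit.unit_spec, Units.val_one]
    rw [hζ.pow_eq_one_iff_dvd, Fintype.card_units]
    exact hn
  set χ0 : MulChar F ℂ := MulChar.ofRootOfUnity hζu hg
  have hχ0 : χ0 g = ζ := MulChar.ofRootOfUnity_spec hζu hg
  have hpow : ∀ i : ℕ, (χ0 ^ i) g = ζ ^ i := fun i => by
    rw [MulChar.pow_apply_coe, hχ0]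
  have hH : Finset.univ.filter (fun χ : MulChar F ℂ => χ ^ n = 1) =
      (Finset.range n).image (fun i => χ0 ^ i) := by
    ext χ
    simp only [Finset.mem_filter, Finset.mem_univ, true_and, Finset.mem_image, Finset.mem_range]
    constructor
    · intro h
      have : χ g ^ n = 1 := by
        rw [← MulChar.pow_apply_coe, h, MulChar.one_apply_coe]
      obtain ⟨i, hi, h⟩ := hζ.eq_pow_of_pow_eq_one this
      exact ⟨i, hi, by rw [MulChar.eq_iff hg, hpow, h]⟩
    · rintro ⟨i, _, rfl⟩
      rw [MulChar.eq_iff hg, MulChar.pow_apply_coe, hpow, MulChar.one_apply_coe, ← pow_mul, mul_comm,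
        pow_mul, hζ.pow_eq_one, one_pow]
  obtain ⟨k, rfl⟩ := (Submonoid.mem_powers_iff _ _).mp (mem_powers_iff_mem_zpowers.mpr (hγ y))
  rw [hH, Finset.sum_image]
  swap
  · intro i hi j hj h
    have := congrArg (fun χ : MulChar F ℂ => χ g) h
    simp only [hpow] at this
    exact hζ.pow_inj (by simpa using hi) (by simpa using hj) this
  have hterm : ∀ i, (χ0 ^ i) (Algebra.norm F (((γ ^ k : Eˣ)) : E)) = (ζ ^ k) ^ i := by
    intro i
    rw [Units.val_pow_eq_pow_val, map_pow, hγg, map_pow, hpow, ← pow_mul, ← pow_mul, mul_comm]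
  simp only [hterm]
  by_cases hk : n ∣ k
  · rw [(hζ.pow_eq_one_iff_dvd k).mpr hk]
    obtain ⟨k', rfl⟩ := hk
    have hc : IsCyclic Eˣ := inferInstance
    have h1 := IsCyclic.card_powMonoidHom_ker Eˣ n
    have h2 : (Finset.univ.filter fun x : Eˣ => x ^ n = γ ^ (n * k')).card = n := by
      rw [Nat.card_eq_fintype_card (α := Eˣ), Nat.gcd_eq_right hnE] at h1
      refine Eq.trans ?_ h1
      rw [Nat.card_eq_fintype_card, Fintype.card_subtype]
      refine Finset.card_bij (fun x _ => x * (γ ^ k')⁻¹) ?_ ?_ ?_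
      · intro x hx
        simp only [Finset.mem_filter, Finset.mem_univ, true_and] at hx
        simp [MonoidHom.mem_ker, mul_pow, hx, ← pow_mul, mul_comm]
      · intro a _ b _ h
        simpa using h
      · intro x hx
        simp only [Finset.mem_filter, Finset.mem_univ, true_and, MonoidHom.mem_ker,
          powMonoidHom_apply] at hx
        exact ⟨x * γ ^ k', by simp [mul_pow, hx, ← pow_mul, mul_comm], by simp⟩
    rw [h2]; simp
  · have h1 : ζ ^ k ≠ 1 := fun h => hk ((hζ.pow_eq_one_iff_dvd k).mp h)
    have h2 : (ζ ^ k) ^ n = 1 := by rw [← pow_mul, mul_comm, pow_mul, hζ.pow_eq_one, one_pow]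
    rw [geom_sum_eq h1, h2, sub_self, zero_div, Nat.cast_eq_zero, Finset.card_eq_zero,
      Finset.filter_eq_empty_iff]
    intro x _ hx
    obtain ⟨j, rfl⟩ := (Submonoid.mem_powers_iff _ _).mp (mem_powers_iff_mem_zpowers.mpr (hγ x))
    rw [← pow_mul, pow_eq_pow_iff_modEq, orderOf_eq_card_of_forall_mem_zpowers hγ,
      Nat.card_eq_fintype_card] at hx
    have h3 := hx.of_dvd hnE
    exact hk ((h3.dvd_iff dvd_rfl).mp (dvd_mul_left n j))

def psi (p : ℕ) [Fact p.Prime] (F : Type*) [Field F] [Fintype F] [Algebra (ZMod p) F] :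
    AddChar F ℂ :=
  (ZMod.stdAddChar (N := p)).compAddMonoidHom (Algebra.trace (ZMod p) F).toAddMonoidHom

lemma psi_ne_one (p : ℕ) [Fact p.Prime] (F : Type*) [Field F] [Fintype F] [Algebra (ZMod p) F] :
    psi p F ≠ 1 := by
  intro h
  obtain ⟨x, hx⟩ := Algebra.trace_surjective (ZMod p) F 1
  have h1 : psi p F x = 1 := by rw [h]; rfl
  have h2 : psi p F x = ZMod.stdAddChar (N := p) 1 := by rw [← hx]; rfl
  rw [h2, ← (ZMod.stdAddChar (N := p)).map_zero_eq_one] at h1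
  exact one_ne_zero (ZMod.injective_stdAddChar h1)

end HD

namespace HD

lemma eChar_eq (p : ℕ) [Fact p.Prime] (F : Type*) [Field F] [Fintype F] [Algebra (ZMod p) F]
    (x : F) : eChar p F x = psi p F x := by
  have : psi p F x = ZMod.stdAddChar (N := p) (Algebra.trace (ZMod p) F x) := rfl
  rw [this, eChar]
  have h := ZMod.stdAddChar_coe (N := p) ((Algebra.trace (ZMod p) F x).val : ℤ)
  rw [Int.cast_natCast, ZMod.natCast_zmod_val, Int.cast_natCast] at h
  rw [h]

lemma eChar_eq' (p : ℕ) [Fact p.Prime] (F E : Type*) [Field F] [Fintype F] [Field E] [Fintype E]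
    [Algebra F E] [Algebra (ZMod p) F] [Algebra (ZMod p) E]
    (x : E) : eChar p E x = psi p F (Algebra.trace F E x) := by
  have : IsScalarTower (ZMod p) F E := IsScalarTower.of_algebraMap_eq' (Subsingleton.elim _ _)
  rw [eChar_eq]
  change ZMod.stdAddChar (N := p) (Algebra.trace (ZMod p) E x) =
    ZMod.stdAddChar (N := p) (Algebra.trace (ZMod p) F (Algebra.trace F E x))
  rw [Algebra.trace_trace]

lemma sum_units {E : Type*} [Field E] [Fintype E] (f : E → ℂ) (h0 : f 0 = 0) :
    ∑ y : Eˣ, f y = ∑ y : E, f y := by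
  refine Finset.sum_of_injOn (fun u : Eˣ => (u : E)) ?_ ?_ ?_ ?_
  · intro a _ b _ h; exact Units.ext h
  · intro a _; simp
  · intro x _ hx
    by_cases h : x = 0
    · rw [h, h0]
    · exact absurd ⟨Units.mk0 x h, by simp, rfl⟩ hx
  · intro a _; rfl

lemma sum_pow_units {F : Type*} [Field F] [Fintype F] (χ : MulChar F ℂ) {t : ℕ} :
    ∑ c : Fˣ, χ ((c : F) ^ t) = if χ ^ t = 1 then (Fintype.card F : ℂ) - 1 else 0 := by
  have h1 : ∀ c : Fˣ, χ ((c : F) ^ t) = (χ ^ t) c := fun c => by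
    rw [map_pow, MulChar.pow_apply_coe]
  simp only [h1]
  split_ifs with h
  · rw [h]
    simp [MulChar.one_apply_coe, Fintype.card_units, Nat.cast_sub Fintype.one_lt_card.le]
  · rw [sum_units (fun x => (χ ^ t) x) (MulChar.map_zero _)]
    exact MulChar.sum_eq_zero_of_ne_one h

end HD

theorem main_aux (p t n l i0 : ℕ) [Fact p.Prime]
    (ht0 : 0 < t)
    (F E : Type*) [Field F] [Fintype F] [Field E] [Fintype E]
    [Algebra F E] [Algebra (ZMod p) F] [Algebra (ZMod p) E]
    (hE : Fintype.card E = Fintype.card F ^ t)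
    (g : Fˣ) (hg : ∀ u : Fˣ, u ∈ Subgroup.zpowers g)
    (γ : Eˣ) (hγ : ∀ u : Eˣ, u ∈ Subgroup.zpowers γ)
    (hγg : Algebra.norm F ((γ : Eˣ) : E) = (g : F))
    (hn0 : 0 < n) (hn : n ∣ Fintype.card F - 1) (hl : l = Nat.gcd t n) (mt : ℕ) :
    MM p F E ((γ : Eˣ) : E) 0 mt n i0 =
      ((Fintype.card F : ℂ) - 1) *
        (-1 + (-1 : ℂ) ^ t * (Fintype.card F : ℂ) *
          ∑ᶠ (lam : MulChar F ℂ) (_ : lam ^ l = 1 ∧ lam ≠ 1),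
            jacobiS F t lam * lam⁻¹ ((g : F) ^ i0)) := by
  let _ : Fintype (MulChar F ℂ) := Fintype.ofFinite _
  have hψ := HD.psi_ne_one p F
  set ψ := HD.psi p F with hψdef
  have hfr : Module.finrank F E = t := HD.finrank_eq hE
  -- inner sum
  have hin : ∀ f : Eˣ → ℂ, ∑ x : Eˣ, f (x ^ n) =
      ∑ χ ∈ Finset.univ.filter (fun χ : MulChar F ℂ => χ ^ n = 1),
        ∑ y : Eˣ, χ (Algebra.norm F (y : E)) * f y := by
    intro f
    rw [Finset.sum_comm]
    simp only [← Finset.sum_mul]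
    simp only [← HD.card_pow_eq hn0 hn hE g hg γ hγ hγg]
    rw [← Finset.sum_fiberwise (s := Finset.univ) (g := fun x : Eˣ => x ^ n)]
    refine Finset.sum_congr rfl fun y _ => ?_
    rw [Finset.sum_congr rfl (g := fun _ => f y) fun x hx => by rw [(Finset.mem_filter.mp hx).2],
      Finset.sum_const, nsmul_eq_mul]
  have hgauss : ∀ χ : MulChar F ℂ, ∀ b : Eˣ,
      ∑ y : Eˣ, χ (Algebra.norm F (y : E)) * ψ (Algebra.trace F E ((b : E) * y)) =
        χ⁻¹ (Algebra.norm F (b : E)) * ((-1) ^ (t - 1) * gaussSum χ ψ ^ t) := by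
    intro χ b
    have hb : Algebra.norm F (b : E) ≠ 0 := Algebra.norm_ne_zero_iff.mpr b.ne_zero
    rw [← HD.hasse_davenport χ hψ ht0 hE,
      ← HD.sum_units (fun x : E => χ (Algebra.norm F x) * ψ (Algebra.trace F E x)), Finset.mul_sum]
    · refine Fintype.sum_equiv (Equiv.mulLeft b) _ _ fun y => ?_
      have hinv : χ⁻¹ (Algebra.norm F (b : E)) * χ (Algebra.norm F (b : E)) = 1 := by
        rw [← MulChar.mul_apply, inv_mul_cancel, MulChar.one_apply (Ne.isUnit hb)]
      rw [Equiv.coe_mulLeft, Units.val_mul, map_mul (Algebra.norm F), map_mul χ]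
      linear_combination -(χ (Algebra.norm F (y : E)) *
        ψ (Algebra.trace F E ((b : E) * y))) * hinv
    · simp [Algebra.norm_zero, MulChar.map_zero]
  have hM : MM p F E ((γ : Eˣ) : E) 0 mt n i0 =
      ∑ χ ∈ Finset.univ.filter (fun χ : MulChar F ℂ => χ ^ n = 1),
        (if χ ^ t = 1 then (Fintype.card F : ℂ) - 1 else 0) *
          (χ⁻¹ ((g : F) ^ i0) * ((-1) ^ (t - 1) * gaussSum χ ψ ^ t)) := by
    unfold MM
    have h1 : ∀ c : Fˣ, ∑ x : Eˣ,
        eChar p E (algebraMap F E (c : F) * (γ : E) ^ i0 * (x : E) ^ n) =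
        ∑ χ ∈ Finset.univ.filter (fun χ : MulChar F ℂ => χ ^ n = 1),
          χ⁻¹ ((c : F) ^ t) * (χ⁻¹ ((g : F) ^ i0) * ((-1) ^ (t - 1) * gaussSum χ ψ ^ t)) := by
      intro c
      have := hin (fun y => ψ (Algebra.trace F E
        ((Units.map (algebraMap F E : F →* E) c * γ ^ i0 : Eˣ) * (y : E))))
      simp only [hgauss] at this
      simp only [HD.eChar_eq' p F E, ← hψdef]
      simp only [Units.val_mul, Units.val_pow_eq_pow_val, Units.coe_map, MonoidHom.coe_coe] at this
      rw [this]
      refine Finset.sum_congr rfl fun χ _ => ?_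
      rw [map_mul, map_pow, hγg, Algebra.norm_algebraMap, hfr, map_mul, mul_assoc]
    simp only [h1]
    simp only [mul_zero, neg_zero, HD.eChar_eq, AddChar.map_zero_eq_one, one_mul]
    rw [Finset.sum_comm]
    refine Finset.sum_congr rfl fun χ _ => ?_
    rw [← Finset.sum_mul, HD.sum_pow_units]
    simp only [inv_pow, inv_eq_one]
  have hset : (Finset.univ.filter (fun χ : MulChar F ℂ => χ ^ n = 1)).filter (fun χ => χ ^ t = 1) =
      insert 1 (Finset.univ.filter (fun χ : MulChar F ℂ => χ ^ l = 1 ∧ χ ≠ 1)) := by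
    ext χ
    simp only [Finset.mem_filter, Finset.mem_univ, true_and, Finset.mem_insert]
    have : χ ^ l = 1 ↔ χ ^ n = 1 ∧ χ ^ t = 1 := by
      rw [hl, ← orderOf_dvd_iff_pow_eq_one, ← orderOf_dvd_iff_pow_eq_one,
        ← orderOf_dvd_iff_pow_eq_one, Nat.dvd_gcd_iff, and_comm]
    rw [← this]
    by_cases h : χ = 1
    · simp [h]
    · simp [h]
  have hfs : ∑ᶠ (lam : MulChar F ℂ) (_ : lam ^ l = 1 ∧ lam ≠ 1),
            jacobiS F t lam * lam⁻¹ ((g : F) ^ i0) =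
      ∑ χ ∈ Finset.univ.filter (fun χ : MulChar F ℂ => χ ^ l = 1 ∧ χ ≠ 1),
        jacobiS F t χ * χ⁻¹ ((g : F) ^ i0) := by
    rw [finsum_eq_sum_of_fintype, Finset.sum_filter]
    refine Finset.sum_congr rfl fun χ _ => ?_
    rw [finsum_eq_if]
  rw [hM, hfs]
  simp only [ite_mul, zero_mul]
  rw [← Finset.sum_filter, hset, Finset.sum_insert (by simp), mul_add, Finset.mul_sum,
    Finset.mul_sum]
  obtain ⟨k, rfl⟩ : ∃ k, t = k + 1 := ⟨t - 1, by omega⟩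
  congr 1
  · have h1 : gaussSum (1 : MulChar F ℂ) ψ = -1 := by
      have h2 := AddChar.sum_eq_zero_of_ne_one hψ
      rw [← Finset.add_sum_erase _ _ (Finset.mem_univ (0:F)), AddChar.map_zero_eq_one] at h2
      rw [gaussSum, ← Finset.add_sum_erase _ _ (Finset.mem_univ (0:F)), MulChar.map_zero, zero_mul,
        zero_add, ← add_right_inj (1 : ℂ), add_neg_cancel, ← h2]
      congr 1
      refine Finset.sum_congr rfl fun x hx => ?_
      rw [MulChar.one_apply (Ne.isUnit (Finset.ne_of_mem_erase hx)), one_mul]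
    rw [h1, inv_one, ← Units.val_pow_eq_pow_val, MulChar.one_apply_coe, Nat.add_sub_cancel, pow_succ,
      one_mul, ← mul_assoc ((-1 : ℂ) ^ k), ← mul_pow]
    simp
  · refine Finset.sum_congr rfl fun χ hχ => ?_
    have hχ := (Finset.mem_filter.mp hχ).2
    have hχt : χ ^ (k + 1) = 1 := by
      rw [← orderOf_dvd_iff_pow_eq_one] at hχ ⊢
      exact hχ.1.trans (hl ▸ Nat.gcd_dvd_left _ _)
    rw [HD.gauss_pow χ hψ hχ.2 ht0 hχt, Nat.add_sub_cancel]
    rw [show (∑ v : Fin (k+1) → F, if (∑ i, v i) = 1 then χ (∏ i, v i) else 0) =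
      jacobiS F (k+1) χ from rfl]
    ring

/-- If `p ∤ m/t`, `d ∣ h` and `a = 0` then
`M_t = (q−1)·(−1 + (−1)^t·q·Σ_{λ∈H_l^*} J_t(λ)·λ̄(g^{i_0}))`, where `l = gcd(t, s/d)`. -/
theorem stmt5 (p r m s h t d l i0 : ℕ) [Fact p.Prime] (hr : 0 < r) (hm : 2 ≤ m)
    (ht : t ∣ m) (ht0 : 0 < t)
    (F E : Type*) [Field F] [Fintype F] [Field E] [Fintype E]
    [Algebra F E] [Algebra (ZMod p) F] [Algebra (ZMod p) E]
    (hF : Fintype.card F = p ^ r) (hE : Fintype.card E = Fintype.card F ^ t)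
    (g : Fˣ) (hg : ∀ u : Fˣ, u ∈ Subgroup.zpowers g)
    (γ : Eˣ) (hγ : ∀ u : Eˣ, u ∈ Subgroup.zpowers γ)
    (hγg : Algebra.norm F ((γ : Eˣ) : E) = (g : F))
    (hs : 0 < s) (hsq : s ∣ Fintype.card F - 1) (hh : h < s)
    (hd : d = Nat.gcd (m / t) s) (hl : l = Nat.gcd t (s / d))
    (hpmt : ¬ p ∣ m / t) (hdh : d ∣ h)
    (hi0 : i0 < s / d ∧ (m / (d * t)) * i0 ≡ h / d [MOD s / d])
    (a : F) (ha : a = 0) :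
    MM p F E ((γ : Eˣ) : E) a (m / t) (s / d) i0 =
      ((Fintype.card F : ℂ) - 1) *
        (-1 + (-1 : ℂ) ^ t * (Fintype.card F : ℂ) *
          ∑ᶠ (lam : MulChar F ℂ) (_ : lam ^ l = 1 ∧ lam ≠ 1),
            jacobiS F t lam * lam⁻¹ ((g : F) ^ i0)) := by
  subst ha
  have hsd : s / d ∣ s := Nat.div_dvd_of_dvd (hd ▸ Nat.gcd_dvd_right _ _)
  exact main_aux p t (s / d) l i0 ht0 F E hE g hg γ hγ hγg (Nat.pos_of_dvd_of_pos hsd hs)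
    (hsd.trans hsq) hl (m / t)

end
end

section
/- Assume p ∤ (m/t), d | h, and a ≠ 0, and set a_0 = −(m/t)·a^{−1} ∈ F_q^* (with m/t taken mod p). Then M_t = Σ_{λ ∈ H_{s/d}} G_t(λ̄) · G_1(λ^t) · λ(a_0^t · g^{i_0}) = 1 + (−1)^{t−1} · q · Σ_{λ ∈ H_{s/d}^*} J_t(λ̄) · λ((−a_0)^t · g^{i_0}). -/
noncomputable section

open Complex Polynomial Classical

section HD
set_option linter.unusedSectionVars false
variable {F : Type*} [Field F] [Fintype F]

def hdL (χ : MulChar F ℂ) (ψ : AddChar F ℂ) (f : F[X]) : ℂ :=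
  χ ((-1) ^ f.natDegree * f.coeff 0) * ψ (-f.nextCoeff)

theorem hd_fin (n : ℕ) : {f : F[X] | f.Monic ∧ f.natDegree = n}.Finite := by
  refine Set.Finite.of_injOn (f := fun (f : F[X]) (i : Fin (n+1)) => f.coeff i) (t := Set.univ)
    (fun _ _ => Set.mem_univ _) ?_ Set.finite_univ
  intro f hf g hg h
  ext i
  by_cases hi : i < n + 1
  · exact congrFun h ⟨i, hi⟩
  · rw [coeff_eq_zero_of_natDegree_lt (by have := hf.2; omega),
      coeff_eq_zero_of_natDegree_lt (by have := hg.2; omega)]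

def hdMon (F : Type*) [Field F] [Fintype F] (n : ℕ) : Finset F[X] := (hd_fin (F := F) n).toFinset

theorem mem_hdMon {n : ℕ} {f : F[X]} : f ∈ hdMon F n ↔ f.Monic ∧ f.natDegree = n := by
  simp [hdMon]

def hdIrr (F : Type*) [Field F] [Fintype F] (N : ℕ) : Finset F[X] :=
  ((Finset.range (N+1)).biUnion (hdMon F)).filter Irreducible

theorem mem_hdIrr {n : ℕ} {f : F[X]} :
    f ∈ hdIrr F n ↔ f.Monic ∧ f.natDegree ≤ n ∧ Irreducible f := by
  simp [hdIrr, mem_hdMon]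
  tauto

theorem hdL_one (χ : MulChar F ℂ) (ψ : AddChar F ℂ) : hdL χ ψ 1 = 1 := by
  simp [hdL, nextCoeff]

theorem hdL_mul (χ : MulChar F ℂ) (ψ : AddChar F ℂ) {f g : F[X]} (hf : f.Monic) (hg : g.Monic) :
    hdL χ ψ (f * g) = hdL χ ψ f * hdL χ ψ g := by
  simp only [hdL, hf.natDegree_mul hg, hf.nextCoeff_mul hg, mul_coeff_zero, neg_add, pow_add,
    AddChar.map_add_eq_mul]
  rw [mul_mul_mul_comm, map_mul]
  ring

theorem hdL_pow (χ : MulChar F ℂ) (ψ : AddChar F ℂ) {f : F[X]} (hf : f.Monic) (k : ℕ) :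
    hdL χ ψ (f ^ k) = hdL χ ψ f ^ k := by
  induction k with
  | zero => simp [hdL_one]
  | succ k ih => rw [pow_succ, hdL_mul χ ψ (hf.pow k) hf, ih, pow_succ]

def hdA (χ : MulChar F ℂ) (ψ : AddChar F ℂ) (n : ℕ) : ℂ := ∑ f ∈ hdMon F n, hdL χ ψ f

theorem hdA_zero (χ : MulChar F ℂ) (ψ : AddChar F ℂ) : hdA χ ψ 0 = 1 := by
  have : hdMon F 0 = {1} := by
    ext f
    rw [mem_hdMon, Finset.mem_singleton]
    constructor
    · rintro ⟨h1, h2⟩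
      exact h1.natDegree_eq_zero.mp h2
    · rintro rfl
      simp
  simp [hdA, this, hdL_one]

theorem hdA_one (χ : MulChar F ℂ) (ψ : AddChar F ℂ) : hdA χ ψ 1 = ∑ x : F, χ x * ψ x := by
  symm
  refine Finset.sum_bij (fun c _ => X - C c) ?_ ?_ ?_ ?_
  · intro c _
    rw [mem_hdMon]
    exact ⟨monic_X_sub_C c, natDegree_X_sub_C c⟩
  · intro a _ b _ h
    simpa using h
  · intro f hf
    rw [mem_hdMon] at hf
    refine ⟨-f.coeff 0, Finset.mem_univ _, ?_⟩
    have := hf.1.eq_X_add_C hf.2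
    rw [this]; simp
  · intro c _
    simp [hdL, nextCoeff]

theorem hdA_ge (χ : MulChar F ℂ) (ψ : AddChar F ℂ) (hχ : χ ≠ 1) (n : ℕ) (hn : 2 ≤ n) :
    hdA χ ψ n = 0 := by
  obtain ⟨u, hu⟩ := MulChar.ne_one_iff.mp hχ
  have hco : ∀ (f : F[X]) (c : F), f ∈ hdMon F n → (f + C c) ∈ hdMon F n ∧
      (f + C c).nextCoeff = f.nextCoeff := by
    intro f c hf
    rw [mem_hdMon] at hf ⊢
    have h1 : (C c).degree < f.degree := by
      refine lt_of_le_of_lt degree_C_le ?_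
      rw [degree_eq_natDegree hf.1.ne_zero, hf.2]
      exact_mod_cast (by omega)
    have h2 : (f + C c).natDegree = n := by rw [natDegree_add_C, hf.2]
    refine ⟨⟨hf.1.add_of_left h1, h2⟩, ?_⟩
    rw [nextCoeff_of_natDegree_pos (by omega), nextCoeff_of_natDegree_pos (by omega), h2, hf.2,
      coeff_add, coeff_C, if_neg (by omega), add_zero]
  have key : χ u * hdA χ ψ n = hdA χ ψ n := by
    rw [hdA, Finset.mul_sum]
    refine Finset.sum_bij' (fun f _ => f + C (((u:F) - 1) * f.coeff 0))
      (fun f _ => f + C (((u:F)⁻¹ - 1) * f.coeff 0)) ?_ ?_ ?_ ?_ ?_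
    · intro f hf; exact (hco f _ hf).1
    · intro f hf; exact (hco f _ hf).1
    · intro f hf
      simp only [coeff_add, coeff_C_zero]
      rw [add_assoc, ← C_add]
      have : ((u:F) - 1) * f.coeff 0 + ((u:F)⁻¹ - 1) * (f.coeff 0 + ((u:F)-1) * f.coeff 0) = 0 := by
        have := u.ne_zero
        field_simp
        ring
      rw [this]; simp
    · intro f hf
      simp only [coeff_add, coeff_C_zero]
      rw [add_assoc, ← C_add]
      have : ((u:F)⁻¹ - 1) * f.coeff 0 + ((u:F) - 1) * (f.coeff 0 + ((u:F)⁻¹-1) * f.coeff 0) = 0 := by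
        have := u.ne_zero
        field_simp
        ring
      rw [this]; simp
    · intro f hf
      have h1 := hco f (((u:F) - 1) * f.coeff 0) hf
      rw [hdL, hdL, h1.2, (mem_hdMon.mp h1.1).2, (mem_hdMon.mp hf).2, coeff_add, coeff_C_zero,
        ← mul_assoc, ← map_mul]
      congr 2
      ring
  have : (χ u - 1) * hdA χ ψ n = 0 := by rw [sub_mul, key]; ring
  exact (mul_eq_zero.mp this).resolve_left (sub_ne_zero.mpr hu)

theorem hd_count (N n : ℕ) (hn : n ≤ N) (f : F[X]) (hf : f ∈ hdMon F n) :
    n = ∑ P ∈ hdIrr F N, ∑ k ∈ Finset.Icc 1 N, if P ^ k ∣ f then P.natDegree else 0 := by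
  rw [mem_hdMon] at hf
  obtain ⟨hm, hdeg⟩ := hf
  have hf0 := hm.ne_zero
  set M := UniqueFactorizationMonoid.normalizedFactors f with hM
  have hMmon : ∀ P ∈ M, P.Monic := by
    intro P hP
    have h1 := UniqueFactorizationMonoid.normalize_normalized_factor P hP
    rw [← h1]
    exact monic_normalize (UniqueFactorizationMonoid.irreducible_of_normalized_factor P hP).ne_zero
  have hprod : M.prod = f := by
    have h1 := UniqueFactorizationMonoid.prod_normalizedFactors hf0
    exact eq_of_monic_of_associated (by simpa using monic_multiset_prod_of_monic M id (by simpa using hMmon)) hm h1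
  have hn1 : n = (M.map natDegree).sum := by
    rw [← hdeg, ← natDegree_multiset_prod_of_monic M hMmon, hprod]
  rw [hn1, Finset.sum_multiset_map_count]
  have hsub : M.toFinset ⊆ hdIrr F N := by
    intro P hP
    rw [Multiset.mem_toFinset] at hP
    rw [mem_hdIrr]
    refine ⟨hMmon P hP, ?_, UniqueFactorizationMonoid.irreducible_of_normalized_factor P hP⟩
    have := natDegree_le_of_dvd (UniqueFactorizationMonoid.dvd_of_mem_normalizedFactors hP) hf0
    omega
  rw [Finset.sum_subset hsub]
  · refine Finset.sum_congr rfl ?_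
    intro P hP
    rw [mem_hdIrr] at hP
    have hcnt : ∀ k, P ^ k ∣ f ↔ k ≤ M.count P := by
      intro k
      rw [pow_dvd_iff_le_emultiplicity,
        UniqueFactorizationMonoid.emultiplicity_eq_count_normalizedFactors hP.2.2 hf0,
        hP.1.normalize_eq_self]
      exact_mod_cast Iff.rfl
    have hle : M.count P ≤ N := by
      have h1 := (hcnt (M.count P)).mpr le_rfl
      have h2 := natDegree_le_of_dvd h1 hf0
      rw [natDegree_pow] at h2
      have h3 := hP.2.2.natDegree_pos
      nlinarith
    rw [← Finset.sum_filter, Finset.sum_const]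
    congr 1
    have : (Finset.Icc 1 N).filter (fun k => P ^ k ∣ f) = Finset.Icc 1 (M.count P) := by
      ext k
      simp only [Finset.mem_filter, Finset.mem_Icc, hcnt]
      omega
    rw [this]; simp
  · intro P _ hP
    rw [Multiset.mem_toFinset] at hP
    simp [hP]

theorem hd_inner (χ : MulChar F ℂ) (ψ : AddChar F ℂ) (n k : ℕ) (P : F[X]) (hP : P.Monic) :
    (∑ f ∈ hdMon F n, if P ^ k ∣ f then hdL χ ψ f else 0) =
      if k * P.natDegree ≤ n then hdL χ ψ P ^ k * hdA χ ψ (n - k * P.natDegree) else 0 := by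
  have hPk := hP.pow k
  split_ifs with h
  · rw [← Finset.sum_filter, hdA, Finset.mul_sum]
    symm
    refine Finset.sum_bij (fun g _ => P ^ k * g) ?_ ?_ ?_ ?_
    · intro g hg
      rw [mem_hdMon] at hg
      rw [Finset.mem_filter, mem_hdMon]
      refine ⟨⟨hPk.mul hg.1, ?_⟩, dvd_mul_right _ _⟩
      rw [hPk.natDegree_mul hg.1, hP.natDegree_pow, hg.2]
      omega
    · intro a _ b _ hab
      exact mul_left_cancel₀ hPk.ne_zero hab
    · intro f hf
      rw [Finset.mem_filter, mem_hdMon] at hf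
      obtain ⟨⟨h1, h2⟩, g, hg⟩ := hf
      have hgm : g.Monic := hPk.of_mul_monic_left (hg ▸ h1)
      refine ⟨g, ?_, hg.symm⟩
      rw [mem_hdMon]
      refine ⟨hgm, ?_⟩
      rw [hg, hPk.natDegree_mul hgm, hP.natDegree_pow] at h2
      omega
    · intro g hg
      rw [mem_hdMon] at hg
      rw [hdL_mul χ ψ hPk hg.1, hdL_pow χ ψ hP]
  · refine Finset.sum_eq_zero ?_
    intro f hf
    rw [mem_hdMon] at hf
    rw [if_neg]
    intro hd
    have := natDegree_le_of_dvd hd hf.1.ne_zero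
    rw [hP.natDegree_pow] at this
    omega

def hdS (χ : MulChar F ℂ) (ψ : AddChar F ℂ) (N n : ℕ) : ℂ :=
  ∑ P ∈ hdIrr F N, ∑ k ∈ Finset.Icc 1 N,
    if k * P.natDegree = n then (P.natDegree : ℂ) * hdL χ ψ P ^ k else 0

theorem hd_newton (χ : MulChar F ℂ) (ψ : AddChar F ℂ) (N n : ℕ) (hn : n ≤ N) :
    (n : ℂ) * hdA χ ψ n = ∑ P ∈ hdIrr F N, ∑ k ∈ Finset.Icc 1 N,
      if k * P.natDegree ≤ n then
        (P.natDegree : ℂ) * hdL χ ψ P ^ k * hdA χ ψ (n - k * P.natDegree) else 0 := by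
  have h1 : (n : ℂ) * hdA χ ψ n = ∑ f ∈ hdMon F n, ∑ P ∈ hdIrr F N, ∑ k ∈ Finset.Icc 1 N,
      (P.natDegree : ℂ) * (if P ^ k ∣ f then hdL χ ψ f else 0) := by
    rw [hdA, Finset.mul_sum]
    refine Finset.sum_congr rfl ?_
    intro f hf
    have := congrArg (Nat.cast : ℕ → ℂ) (hd_count N n hn f hf)
    rw [this]
    push_cast
    rw [Finset.sum_mul]
    refine Finset.sum_congr rfl fun P _ => ?_
    rw [Finset.sum_mul]
    refine Finset.sum_congr rfl fun k _ => ?_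
    split_ifs <;> simp
  rw [h1, Finset.sum_comm]
  refine Finset.sum_congr rfl fun P hP => ?_
  rw [Finset.sum_comm]
  refine Finset.sum_congr rfl fun k _ => ?_
  rw [← Finset.mul_sum, hd_inner χ ψ n k P (mem_hdIrr.mp hP).1]
  split_ifs
  · ring
  · simp

theorem hdS_one (χ : MulChar F ℂ) (ψ : AddChar F ℂ) (N : ℕ) (hN : 1 ≤ N) :
    hdS χ ψ N 1 = hdA χ ψ 1 := by
  have := hd_newton χ ψ N 1 hN
  rw [Nat.cast_one, one_mul] at this
  rw [this, hdS]
  refine Finset.sum_congr rfl fun P hP => Finset.sum_congr rfl fun k hk => ?_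
  have h1 := (mem_hdIrr.mp hP).2.2.natDegree_pos
  rw [Finset.mem_Icc] at hk
  have h2 : 1 ≤ k * P.natDegree := Nat.mul_pos (by omega) h1
  by_cases h : k * P.natDegree = 1
  · simp [h, hdA_zero]
  · rw [if_neg h, if_neg (by omega)]

theorem hdS_succ (χ : MulChar F ℂ) (ψ : AddChar F ℂ) (hχ : χ ≠ 1) (N n : ℕ) (hn0 : 1 ≤ n)
    (hN : n + 1 ≤ N) : hdS χ ψ N (n+1) = - hdA χ ψ 1 * hdS χ ψ N n := by
  have h0 := hd_newton χ ψ N (n+1) hN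
  rw [hdA_ge χ ψ hχ (n+1) (by omega), mul_zero] at h0
  have : hdS χ ψ N (n+1) + hdA χ ψ 1 * hdS χ ψ N n = 0 := by
    rw [h0, hdS, hdS, Finset.mul_sum, ← Finset.sum_add_distrib]
    refine Finset.sum_congr rfl fun P hP => ?_
    rw [Finset.mul_sum, ← Finset.sum_add_distrib]
    refine Finset.sum_congr rfl fun k hk => ?_
    generalize k * P.natDegree = j
    rcases lt_trichotomy j n with h | h | h
    · have h1 : ¬ j = n + 1 := by omega
      have h2 : ¬ j = n := by omega
      rw [if_neg h1, if_neg h2, hdA_ge χ ψ hχ (n + 1 - j) (by omega)]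
      simp
    · subst h
      simp
      ring
    · by_cases h' : j = n + 1
      · subst h'
        simp [hdA_zero]
      · rw [if_neg h', if_neg (by omega), if_neg (by omega)]
        simp
  linear_combination this

theorem hdS_eq (χ : MulChar F ℂ) (ψ : AddChar F ℂ) (hχ : χ ≠ 1) (N n : ℕ) 
    (hN : n + 1 ≤ N) : hdS χ ψ N (n+1) = (-1) ^ n * hdA χ ψ 1 ^ (n+1) := by
  induction n with
  | zero => simp [hdS_one χ ψ N hN]
  | succ n ih =>
    rw [hdS_succ χ ψ hχ N (n+1) (by omega) hN, ih (by omega)]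
    ring

variable {E : Type*} [Field E] [Fintype E] [Algebra F E]

theorem hd_elem (χ : MulChar F ℂ) (ψ : AddChar F ℂ) (x : E) (k : ℕ)
    (hk : k * (minpoly F x).natDegree = Module.finrank F E) :
    χ (Algebra.norm F x) * ψ (Algebra.trace F E x) = hdL χ ψ (minpoly F x) ^ k := by
  have hx : IsIntegral F x := .of_finite F x
  have hfr : Module.finrank (IntermediateField.adjoin F {x}) E = k := by
    have h1 := Module.finrank_mul_finrank F (IntermediateField.adjoin F {x}) E
    rw [IntermediateField.adjoin.finrank hx, ← hk, mul_comm] at h1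
    exact Nat.eq_of_mul_eq_mul_right (minpoly.natDegree_pos hx) h1
  have htr := trace_eq_finrank_mul_minpoly_nextCoeff F x
  have hno : Algebra.norm F x = ((-1) ^ (minpoly F x).natDegree * (minpoly F x).coeff 0) ^ k := by
    rw [Algebra.norm_eq_norm_adjoin, hfr]
    congr 1
    have := Algebra.PowerBasis.norm_gen_eq_coeff_zero_minpoly (IntermediateField.adjoin.powerBasis hx)
    simpa [IntermediateField.minpoly_gen F x] using this
  rw [hno, htr, hfr, hdL, map_pow, mul_pow, ← nsmul_eq_mul, AddChar.map_nsmul_eq_pow]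

theorem hasse_davenport (χ : MulChar F ℂ) (ψ : AddChar F ℂ) (hχ : χ ≠ 1) :
    ∑ x : E, χ (Algebra.norm F x) * ψ (Algebra.trace F E x) =
      (-1) ^ (Module.finrank F E - 1) * (∑ x : F, χ x * ψ x) ^ Module.finrank F E := by
  set t := Module.finrank F E with ht
  have ht0 : 0 < t := Module.finrank_pos
  have h1 := hdS_eq χ ψ hχ t (t-1) (by omega)
  rw [show t - 1 + 1 = t by omega, hdA_one] at h1
  rw [← h1, hdS]
  have hmaps : ∀ x ∈ (Finset.univ : Finset E), minpoly F x ∈ hdIrr F t := by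
    intro x _
    have hx : IsIntegral F x := .of_finite F x
    rw [mem_hdIrr]
    exact ⟨minpoly.monic hx, minpoly.natDegree_le x, minpoly.irreducible hx⟩
  rw [← Finset.sum_fiberwise_of_maps_to hmaps]
  refine Finset.sum_congr rfl fun P hP => ?_
  rw [mem_hdIrr] at hP
  obtain ⟨hPm, hPd, hPi⟩ := hP
  have hpos := hPi.natDegree_pos
  by_cases hdvd : P.natDegree ∣ t
  · obtain ⟨k, hk⟩ := hdvd
    have hk' : k * P.natDegree = t := by rw [hk, mul_comm]
    have hk1 : 1 ≤ k := by
      rcases Nat.eq_zero_or_pos k with h | h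
      · subst h; omega
      · exact h
    have hkt : k ≤ t := by nlinarith
    rw [Finset.sum_eq_single k, if_pos hk']
    · have hc : ((Finset.univ : Finset E).filter (fun x => minpoly F x = P)).card
          = P.natDegree := by
        have hsep : P.Separable := PerfectField.separable_of_irreducible hPi
        have hspl : (P.map (algebraMap F E)).Splits := by
          have hd := hPi.natDegree_dvd_iff_dvd_X_pow_card_pow_sub_X (n := t) |>.mp ⟨k, hk⟩
          have hcard : (Nat.card F) ^ t = Fintype.card E := by
            rw [← Nat.card_eq_fintype_card, ht, ← Module.natCard_eq_pow_finrank]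
          rw [hcard] at hd
          have hd' := Polynomial.map_dvd (algebraMap F E) hd
          refine Splits.of_dvd ?_ ?_ hd'
          · simp only [Polynomial.map_sub, Polynomial.map_pow, map_X]
            rw [splits_iff_card_roots, FiniteField.roots_X_pow_card_sub_X, 
              FiniteField.X_pow_card_sub_X_natDegree_eq _ Fintype.one_lt_card]
            rfl
          · simp only [Polynomial.map_sub, Polynomial.map_pow, map_X]
            exact FiniteField.X_pow_card_sub_X_ne_zero _ Fintype.one_lt_card
        rw [← card_rootSet_eq_natDegree hsep hspl, ← Set.toFinset_card]
        congr 1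
        ext x
        simp only [Finset.mem_filter, Finset.mem_univ, true_and, Set.mem_toFinset, mem_rootSet]
        constructor
        · rintro rfl
          exact ⟨hPi.ne_zero, minpoly.aeval F x⟩
        · rintro ⟨_, h⟩
          exact (minpoly.eq_of_irreducible_of_monic hPi h hPm).symm
      rw [← hc, ← nsmul_eq_mul, ← Finset.sum_const]
      refine Finset.sum_congr rfl fun x hx => ?_
      rw [Finset.mem_filter] at hx
      rw [hd_elem χ ψ x k (by rw [hx.2, hk']), hx.2]
    · intro j _ hj
      rw [if_neg]
      intro h
      exact hj (Nat.eq_of_mul_eq_mul_right hpos (h.trans hk'.symm))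
    · intro h
      exact absurd (Finset.mem_Icc.mpr ⟨hk1, hkt⟩) h
  · rw [Finset.filter_false_of_mem, Finset.sum_empty]
    · symm
      refine Finset.sum_eq_zero fun k _ => ?_
      rw [if_neg]
      intro h
      exact hdvd ⟨k, by rw [← h, mul_comm]⟩
    · intro x _ h
      apply hdvd
      rw [← h]
      exact minpoly.degree_dvd (.of_finite F x)
end HD

section Main
set_option linter.unusedSectionVars false

theorem card_pow_one_cyc (G : Type*) [CommGroup G] [IsCyclic G] [Finite G] (N : ℕ)
    (hN : N ∣ Nat.card G) : Nat.card {x : G // x ^ N = 1} = N := by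
  have h := IsCyclic.card_powMonoidHom_ker (G := G) N
  rw [Nat.gcd_eq_right hN] at h
  exact h

variable {F E : Type*} [Field F] [Fintype F] [Field E] [Fintype E] [Algebra F E]

instance mulCharFintype (K : Type*) [Field K] [Fintype K] : Fintype (MulChar K ℂ) :=
  Fintype.ofFinite _

def psiF (p : ℕ) [Fact p.Prime] (F : Type*) [Field F] [Fintype F] [Algebra (ZMod p) F] :
    AddChar F ℂ :=
  (ZMod.stdAddChar (N := p)).compAddMonoidHom (Algebra.trace (ZMod p) F).toAddMonoidHom

theorem eChar_eq (p : ℕ) [Fact p.Prime] [Algebra (ZMod p) F] (x : F) :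
    eChar p F x = psiF p F x := by
  rw [eChar, psiF]
  simp only [AddChar.compAddMonoidHom_apply, ZMod.stdAddChar_apply, ZMod.toCircle_apply]
  rfl

theorem eChar_eq_trace (p : ℕ) [Fact p.Prime] [Algebra (ZMod p) F] [Algebra (ZMod p) E] (x : E) :
    eChar p E x = psiF p F (Algebra.trace F E x) := by
  have : IsScalarTower (ZMod p) F E := IsScalarTower.of_algebraMap_eq' (Subsingleton.elim _ _)
  rw [← eChar_eq, eChar, eChar, Algebra.trace_trace]

theorem psiF_prim (p : ℕ) [Fact p.Prime] [Algebra (ZMod p) F] : (psiF p F).IsPrimitive := by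
  apply AddChar.IsPrimitive.of_ne_one
  rw [AddChar.ne_one_iff]
  obtain ⟨x, hx⟩ := Algebra.trace_surjective (ZMod p) F 1
  refine ⟨x, ?_⟩
  have h : psiF p F x = ZMod.stdAddChar (1 : ZMod p) := by
    rw [← hx]; rfl
  rw [h, ← AddChar.map_zero_eq_one (ZMod.stdAddChar (N := p))]
  intro h2
  exact one_ne_zero (ZMod.injective_stdAddChar h2)

theorem sum_units_eq {K : Type*} [Field K] [Fintype K] (f : K → ℂ) (h0 : f 0 = 0) :
    ∑ x : Kˣ, f x = ∑ x : K, f x := by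
  rw [← Finset.sum_subset (Finset.subset_univ ((Finset.univ : Finset K).erase 0))]
  · refine Finset.sum_bij (fun u _ => (u : K)) (by simp) (fun a _ b _ h => Units.ext h) ?_
      (fun _ _ => rfl)
    intro b hb
    exact ⟨Units.mk0 b (Finset.ne_of_mem_erase hb), Finset.mem_univ _, rfl⟩
  · intro x _ hx
    have : x = 0 := by simpa using hx
    rw [this, h0]

theorem gaussSumN_eq (p : ℕ) [Fact p.Prime] [Algebra (ZMod p) F] [Algebra (ZMod p) E]
    (χ : MulChar F ℂ) : gaussSumN p F E χ =
      ∑ x : E, χ (Algebra.norm F x) * psiF p F (Algebra.trace F E x) := by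
  rw [gaussSumN, sum_units_eq (fun x : E => eChar p E x * χ (Algebra.norm F x))
    (by simp [Algebra.norm_zero, MulChar.map_zero])]
  refine Finset.sum_congr rfl fun x _ => ?_
  rw [eChar_eq_trace (F := F), mul_comm]

theorem gaussSumN_self (p : ℕ) [Fact p.Prime] [Algebra (ZMod p) F] (χ : MulChar F ℂ) :
    gaussSumN p F F χ = ∑ x : F, χ x * psiF p F x := by
  rw [gaussSumN_eq]
  simp [Algebra.norm_self, Algebra.trace_self]

theorem AddChar.map_sum_eq_prod_aux {ι : Type*} (ψ : AddChar F ℂ) (S : Finset ι) (f : ι → F) :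
    ψ (∑ i ∈ S, f i) = ∏ i ∈ S, ψ (f i) := by
  induction S using Finset.induction_on with
  | empty => simp
  | insert a S ha ih => rw [Finset.sum_insert ha, Finset.prod_insert ha, AddChar.map_add_eq_mul, ih]

theorem gaussSumN_one (p : ℕ) [Fact p.Prime] [Algebra (ZMod p) F] [Algebra (ZMod p) E] :
    gaussSumN p F E 1 = -1 := by
  have hp := psiF_prim (F := E) p
  have h1 : ∑ x : E, psiF p E x = 0 := AddChar.sum_eq_zero_of_ne_one (by
    intro h
    have := hp one_ne_zero
    rw [h] at this
    exact this (by ext; simp))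
  have h2 : ∑ x : Eˣ, (fun y : E => if y = 0 then (0 : ℂ) else psiF p E y) (x : E) = -1 := by
    rw [sum_units_eq (fun y : E => if y = 0 then (0 : ℂ) else psiF p E y) (if_pos rfl)]
    rw [← Finset.add_sum_erase _ _ (Finset.mem_univ (0 : E))] at h1 ⊢
    rw [AddChar.map_zero_eq_one] at h1
    rw [if_pos rfl, zero_add, Finset.sum_congr rfl (g := fun x => psiF p E x)]
    · linear_combination h1
    · intro x hx
      rw [if_neg (Finset.ne_of_mem_erase hx)]
  rw [← h2, gaussSumN]
  refine Finset.sum_congr rfl fun x _ => ?_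
  have hu : IsUnit (Algebra.norm F (x : E)) := x.isUnit.map _
  rw [MulChar.one_apply hu, mul_one, eChar_eq]
  exact (if_neg x.ne_zero).symm

theorem gauss_jacobi (ψ : AddChar F ℂ) (hψ : ψ.IsPrimitive) (lam : MulChar F ℂ) (hl : lam ≠ 1)
    (t : ℕ) (ht : 0 < t) :
    (∑ x : F, lam⁻¹ x * ψ x) ^ t * (∑ x : F, (lam ^ t) x * ψ x) =
      (Fintype.card F : ℂ) * lam ((-1) ^ t) * jacobiS F t lam⁻¹ := by
  have hl' : lam⁻¹ ≠ 1 := inv_ne_one.mpr hl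
  set G := ∑ x : F, lam⁻¹ x * ψ x with hG
  have h1 : ∀ c : F, c ≠ 0 → G * lam c = lam (-1) * ∑ y : F, lam⁻¹ y * ψ (-c * y) := by
    intro c hc
    have : G = ∑ y : F, lam⁻¹ (-c * y) * ψ (-c * y) := by
      rw [hG]
      exact (Equiv.sum_comp (Equiv.mulLeft₀ (-c) (neg_ne_zero.mpr hc))
        (fun x => lam⁻¹ x * ψ x)).symm
    rw [this, Finset.sum_mul, Finset.mul_sum]
    refine Finset.sum_congr rfl fun y _ => ?_
    have h2 : lam⁻¹ (-c * y) * lam c = lam (-1) * lam⁻¹ y := by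
      have e1 : lam⁻¹ (-c) * lam (-c) = 1 := by
        rw [← MulChar.mul_apply, inv_mul_cancel, MulChar.one_apply (neg_ne_zero.mpr hc).isUnit]
      have e2 : lam c = lam (-1) * lam (-c) := by rw [← map_mul]; simp
      rw [e2, map_mul]
      linear_combination (lam⁻¹ y * lam (-1)) * e1
    linear_combination ψ (-c * y) * h2
  rw [Finset.mul_sum]
  have h3 : ∀ c : F, G ^ t * ((lam ^ t) c * ψ c) =
      lam (-1) ^ t * ((∑ y : F, lam⁻¹ y * ψ (-c * y)) ^ t * ψ c) := by
    intro c
    by_cases hc : c = 0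
    · subst hc
      have := MulChar.sum_eq_zero_of_ne_one hl'
      simp only [neg_zero, zero_mul, AddChar.map_zero_eq_one, mul_one, MulChar.map_zero, mul_zero]
      rw [this, zero_pow ht.ne', mul_zero]
    · rw [MulChar.pow_apply' _ ht.ne', ← mul_assoc, ← mul_pow, h1 c hc, mul_pow, mul_assoc]
  simp_rw [h3]
  rw [← Finset.mul_sum, map_pow]
  have h4 : ∑ c : F, (∑ y : F, lam⁻¹ y * ψ (-c * y)) ^ t * ψ c =
      (Fintype.card F : ℂ) * jacobiS F t lam⁻¹ := by
    simp_rw [Fintype.sum_pow, Finset.sum_mul]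
    rw [Finset.sum_comm, jacobiS, Finset.mul_sum]
    refine Finset.sum_congr rfl fun v _ => ?_
    have h5 : ∀ c : F, (∏ i, (lam⁻¹ (v i) * ψ (-c * v i))) * ψ c =
        lam⁻¹ (∏ i, v i) * ψ (c * (1 - ∑ i, v i)) := by
      intro c
      rw [Finset.prod_mul_distrib, map_prod, mul_assoc]
      congr 1
      have : ∏ i, ψ (-c * v i) = ψ (∑ i, -c * v i) := by
        exact (AddChar.map_sum_eq_prod_aux ψ _ _).symm
      rw [this, ← AddChar.map_add_eq_mul, ← Finset.mul_sum]
      congr 1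
      ring
    simp_rw [h5]
    rw [← Finset.mul_sum, AddChar.sum_mulShift _ hψ]
    by_cases hv : ∑ i, v i = 1
    · simp [hv, mul_comm]
    · have : ¬ (1 - ∑ i, v i = 0) := fun h => hv (sub_eq_zero.mp h).symm
      simp [hv, this]
  rw [h4]
  ring

theorem count_pow (N : ℕ) (hN : N ∣ Fintype.card F - 1)
    (g : Fˣ) (hg : ∀ u : Fˣ, u ∈ Subgroup.zpowers g)
    (γ : Eˣ) (hγ : ∀ u : Eˣ, u ∈ Subgroup.zpowers γ)
    (hγg : Algebra.norm F (γ : E) = (g : F)) (w : Eˣ) :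
    (((Finset.univ : Finset Eˣ).filter (fun x => x ^ N = w)).card : ℂ) =
      ∑ lam : MulChar F ℂ with lam ^ N = 1, lam⁻¹ (Algebra.norm F (w : E)) := by
  have hN0 : 0 < N := Nat.pos_of_dvd_of_pos hN (by have := Fintype.one_lt_card (α := F); omega)
  have hq1 : Nat.card Fˣ = Fintype.card F - 1 := by
    rw [Nat.card_eq_fintype_card, Fintype.card_units]
  obtain ⟨e⟩ := MulChar.mulEquiv_units F ℂ
  have cyc : IsCyclic (MulChar F ℂ) := isCyclic_of_surjective e.symm e.symm.surjective
  have hT : ((Finset.univ : Finset (MulChar F ℂ)).filter (fun lam => lam ^ N = 1)).card = N := by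
    rw [← Fintype.card_subtype, ← Nat.card_eq_fintype_card]
    exact card_pow_one_cyc _ N (by rw [Nat.card_congr e.toEquiv, hq1]; exact hN)
  by_cases hw : ∃ x0 : Eˣ, x0 ^ N = w
  · obtain ⟨x0, rfl⟩ := hw
    have hE : ((Finset.univ : Finset Eˣ).filter (fun x => x ^ N = x0 ^ N)).card = N := by
      have hqE : N ∣ Nat.card Eˣ := by
        rw [Nat.card_eq_fintype_card, Fintype.card_units, Module.card_eq_pow_finrank (K := F) (V := E)]
        exact hN.trans (by simpa using Nat.sub_dvd_pow_sub_pow (Fintype.card F) 1 (Module.finrank F E))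
      have h1 := card_pow_one_cyc Eˣ N hqE
      rw [Nat.card_eq_fintype_card, Fintype.card_subtype] at h1
      refine Eq.trans ?_ h1
      refine Finset.card_bij (fun x _ => x * x0⁻¹) ?_ ?_ ?_
      · intro x hx
        rw [Finset.mem_filter] at hx ⊢
        exact ⟨Finset.mem_univ _, by rw [mul_pow, hx.2, ← mul_pow]; simp⟩
      · intro x _ y _ h
        exact mul_right_cancel h
      · intro y hy
        rw [Finset.mem_filter] at hy
        exact ⟨y * x0, by simp [mul_pow, hy.2], by simp⟩
    rw [hE]
    rw [Finset.sum_congr rfl (g := fun _ => (1:ℂ))]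
    · simp [hT]
    · intro lam hlam
      rw [Finset.mem_filter] at hlam
      have hu : IsUnit (Algebra.norm F (x0 : E)) := x0.isUnit.map _
      rw [Units.val_pow_eq_pow_val, map_pow, map_pow, ← MulChar.pow_apply' _ hN0.ne', inv_pow,
        hlam.2, inv_one, MulChar.one_apply hu]
  · have h0 : (Finset.univ : Finset Eˣ).filter (fun x => x ^ N = w) = ∅ := by
      apply Finset.filter_false_of_mem
      intro x _ hx
      exact hw ⟨x, hx⟩
    rw [h0, Finset.card_empty, Nat.cast_zero]
    obtain ⟨χ, hχ⟩ := MulChar.exists_mulChar_orderOf F hN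
      (Complex.isPrimitiveRoot_exp N hN0.ne')
    obtain ⟨j, hj⟩ : ∃ j : ℕ, γ ^ j = w := mem_powers_iff_mem_zpowers.mpr (hγ w)
    have hnw : Algebra.norm F (w : E) = (g : F) ^ j := by
      rw [← hj, Units.val_pow_eq_pow_val, map_pow, hγg]
    rw [hnw]
    have hne : χ⁻¹ ((g : F) ^ j) ≠ 1 := by
      intro h
      have hj0 : j ≠ 0 := by
        rintro rfl
        exact hw ⟨1, by rw [← hj]; simp⟩
      have h2 : (χ⁻¹) ^ j = 1 := by
        rw [MulChar.eq_iff hg, MulChar.pow_apply' _ hj0, ← map_pow, h, MulChar.one_apply_coe]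
      rw [inv_pow, inv_eq_one] at h2
      obtain ⟨k, hk⟩ := orderOf_dvd_of_pow_eq_one h2
      rw [hχ] at hk
      exact hw ⟨γ ^ k, by rw [← pow_mul, mul_comm, ← hk, hj]⟩
    set S := ∑ lam : MulChar F ℂ with lam ^ N = 1, lam⁻¹ ((g : F) ^ j) with hS
    have hχN : χ ^ N = 1 := by rw [← hχ]; exact pow_orderOf_eq_one χ
    have key : χ⁻¹ ((g : F) ^ j) * S = S := by
      rw [hS, Finset.mul_sum]
      refine Finset.sum_bij' (fun lam _ => χ * lam) (fun lam _ => χ⁻¹ * lam) ?_ ?_ ?_ ?_ ?_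
      · intro lam h
        rw [Finset.mem_filter] at h ⊢
        exact ⟨Finset.mem_univ _, by rw [mul_pow, hχN, h.2, one_mul]⟩
      · intro lam h
        rw [Finset.mem_filter] at h ⊢
        exact ⟨Finset.mem_univ _, by rw [mul_pow, inv_pow, hχN, h.2, inv_one, one_mul]⟩
      · intro lam _; simp
      · intro lam _; simp
      · intro lam _
        rw [mul_inv, MulChar.mul_apply]
    have : (χ⁻¹ ((g : F) ^ j) - 1) * S = 0 := by rw [sub_mul, key]; ring
    exact ((mul_eq_zero.mp this).resolve_left (sub_ne_zero.mpr hne)).symm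

theorem sum_pow_eChar (p : ℕ) [Fact p.Prime] [Algebra (ZMod p) F] [Algebra (ZMod p) E]
    (N : ℕ) (hN : N ∣ Fintype.card F - 1)
    (g : Fˣ) (hg : ∀ u : Fˣ, u ∈ Subgroup.zpowers g)
    (γ : Eˣ) (hγ : ∀ u : Eˣ, u ∈ Subgroup.zpowers γ)
    (hγg : Algebra.norm F (γ : E) = (g : F)) (y : Eˣ) :
    ∑ x : Eˣ, eChar p E ((y : E) * (x : E) ^ N) =
      ∑ lam : MulChar F ℂ with lam ^ N = 1,
        gaussSumN p F E lam⁻¹ * lam (Algebra.norm F (y : E)) := by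
  have h1 : ∑ x : Eˣ, eChar p E ((y : E) * (x : E) ^ N) =
      ∑ w : Eˣ, (((Finset.univ : Finset Eˣ).filter (fun x => x ^ N = w)).card : ℂ) *
        eChar p E ((y : E) * w) := by
    rw [← Finset.sum_fiberwise (s := (Finset.univ : Finset Eˣ)) (g := fun x => x ^ N)]
    refine Finset.sum_congr rfl fun w _ => ?_
    rw [← nsmul_eq_mul, ← Finset.sum_const]
    refine Finset.sum_congr rfl fun x hx => ?_
    rw [Finset.mem_filter] at hx
    rw [← hx.2, Units.val_pow_eq_pow_val]
  rw [h1]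
  simp_rw [count_pow N hN g hg γ hγ hγg, Finset.sum_mul]
  rw [Finset.sum_comm]
  refine Finset.sum_congr rfl fun lam _ => ?_
  rw [gaussSumN, Finset.sum_mul, ← Equiv.sum_comp (Equiv.mulLeft y) (fun x : Eˣ =>
    eChar p E (x : E) * lam⁻¹ (Algebra.norm F (x : E)) * lam (Algebra.norm F (y : E)))]
  refine Finset.sum_congr rfl fun w _ => ?_
  simp only [Equiv.coe_mulLeft, Units.val_mul, map_mul]
  have hu : IsUnit (Algebra.norm F (y : E)) := y.isUnit.map _
  have e1 : lam⁻¹ (Algebra.norm F (y : E)) * lam (Algebra.norm F (y : E)) = 1 := by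
    rw [← MulChar.mul_apply, inv_mul_cancel, MulChar.one_apply hu]
  linear_combination (-(lam⁻¹ (Algebra.norm F (w : E)) * eChar p E ((y : E) * w))) * e1

theorem MM_eq (p : ℕ) [Fact p.Prime] [Algebra (ZMod p) F] [Algebra (ZMod p) E]
    (N : ℕ) (hN : N ∣ Fintype.card F - 1)
    (g : Fˣ) (hg : ∀ u : Fˣ, u ∈ Subgroup.zpowers g)
    (γ : Eˣ) (hγ : ∀ u : Eˣ, u ∈ Subgroup.zpowers γ)
    (hγg : Algebra.norm F (γ : E) = (g : F)) (i0 n : ℕ) (hn : (n : F) ≠ 0) (a a0 : F)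
    (ha : a ≠ 0) (ha0 : a0 = -(n : F) * a⁻¹) :
    MM p F E (γ : E) a n N i0 = ∑ lam : MulChar F ℂ with lam ^ N = 1,
      gaussSumN p F E lam⁻¹ * gaussSumN p F F (lam ^ Module.finrank F E) *
        lam (a0 ^ Module.finrank F E * (g : F) ^ i0) := by
  set t := Module.finrank F E with ht
  have ht0 : t ≠ 0 := Module.finrank_pos.ne'
  have ha00 : a0 ≠ 0 := by
    rw [ha0]; exact mul_ne_zero (neg_ne_zero.mpr hn) (inv_ne_zero ha)
  rw [MM]
  have h1 : ∀ c : Fˣ, ∑ x : Eˣ, eChar p E (algebraMap F E (c : F) * (γ : E) ^ i0 * (x : E) ^ N) =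
      ∑ lam : MulChar F ℂ with lam ^ N = 1,
        gaussSumN p F E lam⁻¹ * (lam ((c : F) ^ t) * lam ((g : F) ^ i0)) := by
    intro c
    have := sum_pow_eChar p N hN g hg γ hγ hγg (Units.map (algebraMap F E).toMonoidHom c * γ ^ i0)
    simp only [Units.val_mul, Units.coe_map, Units.val_pow_eq_pow_val, map_mul, map_pow, hγg] at this
    simp only [RingHom.toMonoidHom_eq_coe, MonoidHom.coe_coe, Algebra.norm_algebraMap] at this
    rw [this]
    simp [ht]
  simp_rw [h1, Finset.mul_sum]
  rw [Finset.sum_comm]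
  refine Finset.sum_congr rfl fun lam _ => ?_
  rw [gaussSumN, gaussSumN, ← Equiv.sum_comp (Equiv.mulLeft (Units.mk0 a0 ha00)), Finset.mul_sum,
    Finset.sum_mul]
  refine Finset.sum_congr rfl fun b _ => ?_
  simp only [Equiv.coe_mulLeft, Units.val_mul, Units.val_mk0, Algebra.norm_self,
    MonoidHom.id_apply]
  have e1 : -((n : F)⁻¹ * (a0 * (b : F)) * a) = b := by
    rw [ha0]; field_simp
  rw [e1, MulChar.pow_apply' _ ht0]
  simp only [mul_pow, map_mul, map_pow]
  ring

end Main

/-- If `p ∤ m/t`, `d ∣ h` and `a ≠ 0` then, with `a_0 = −(m/t)·a⁻¹`,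
`M_t = Σ_{λ∈H_{s/d}} G_t(λ̄)·G_1(λ^t)·λ(a_0^t·g^{i_0})
     = 1 + (−1)^{t−1}·q·Σ_{λ∈H_{s/d}^*} J_t(λ̄)·λ((−a_0)^t·g^{i_0})`. -/
theorem stmt6 (p r m s h t d i0 : ℕ) [Fact p.Prime] (hr : 0 < r) (hm : 2 ≤ m)
    (ht : t ∣ m) (ht0 : 0 < t)
    (F E : Type*) [Field F] [Fintype F] [Field E] [Fintype E]
    [Algebra F E] [Algebra (ZMod p) F] [Algebra (ZMod p) E]
    (hF : Fintype.card F = p ^ r) (hE : Fintype.card E = Fintype.card F ^ t)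
    (g : Fˣ) (hg : ∀ u : Fˣ, u ∈ Subgroup.zpowers g)
    (γ : Eˣ) (hγ : ∀ u : Eˣ, u ∈ Subgroup.zpowers γ)
    (hγg : Algebra.norm F ((γ : Eˣ) : E) = (g : F))
    (hs : 0 < s) (hsq : s ∣ Fintype.card F - 1) (hh : h < s)
    (hd : d = Nat.gcd (m / t) s)
    (hpmt : ¬ p ∣ m / t) (hdh : d ∣ h)
    (hi0 : i0 < s / d ∧ (m / (d * t)) * i0 ≡ h / d [MOD s / d])
    (a : F) (ha : a ≠ 0) (a0 : F) (ha0 : a0 = -(((m / t : ℕ) : F)) * a⁻¹) :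
    MM p F E ((γ : Eˣ) : E) a (m / t) (s / d) i0 =
      (∑ᶠ (lam : MulChar F ℂ) (_ : lam ^ (s / d) = 1),
        gaussSumN p F E lam⁻¹ * gaussSumN p F F (lam ^ t) * lam (a0 ^ t * (g : F) ^ i0)) ∧
    MM p F E ((γ : Eˣ) : E) a (m / t) (s / d) i0 =
      1 + (-1 : ℂ) ^ (t - 1) * (Fintype.card F : ℂ) *
        ∑ᶠ (lam : MulChar F ℂ) (_ : lam ^ (s / d) = 1 ∧ lam ≠ 1),
          jacobiS F t lam⁻¹ * lam ((-a0) ^ t * (g : F) ^ i0) := by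
  have hcd := hE
  rw [Module.card_eq_pow_finrank (K := F) (V := E)] at hcd
  have hfr : Module.finrank F E = t := Nat.pow_right_injective Fintype.one_lt_card hcd
  have hds : d ∣ s := hd ▸ Nat.gcd_dvd_right _ _
  have hN : s / d ∣ Fintype.card F - 1 := (Nat.div_dvd_of_dvd hds).trans hsq
  have hchar : CharP F p := charP_of_injective_algebraMap (algebraMap (ZMod p) F).injective p
  have hn : ((m / t : ℕ) : F) ≠ 0 := by
    rw [Ne, CharP.cast_eq_zero_iff F p]; exact hpmt
  have h1 := MM_eq p (s / d) hN g hg γ hγ hγg i0 (m / t) hn a a0 ha ha0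
  rw [hfr] at h1
  have hconv : ∀ (P : MulChar F ℂ → Prop) (f : MulChar F ℂ → ℂ) (S : Finset (MulChar F ℂ)),
      (∀ lam, P lam ↔ lam ∈ S) →
      ∑ᶠ (lam : MulChar F ℂ) (_ : P lam), f lam = ∑ lam ∈ S, f lam := by
    intro P f S hS
    exact finsum_cond_eq_sum_of_cond_iff f (fun {x} _ => hS x)
  refine ⟨by rw [h1]; exact (hconv _ _ _ (by simp)).symm, ?_⟩
  rw [h1, hconv _ _ (((Finset.univ : Finset (MulChar F ℂ)).filter
    (fun lam => lam ^ (s / d) = 1)).erase 1) (by intro lam; simp [and_comm]), Finset.mul_sum, ← Finset.add_sum_erase _ _ (a := (1 : MulChar F ℂ))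
    (by simp)]
  have ha00 : a0 ≠ 0 := by
    rw [ha0]; exact mul_ne_zero (neg_ne_zero.mpr hn) (inv_ne_zero ha)
  congr 1
  · have hu : IsUnit (a0 ^ t * (g : F) ^ i0) :=
      (mul_ne_zero (pow_ne_zero _ ha00) (pow_ne_zero _ g.ne_zero)).isUnit
    rw [inv_one, one_pow, MulChar.one_apply hu, gaussSumN_one, gaussSumN_one]
    norm_num
  · refine Finset.sum_congr rfl fun lam hlam => ?_
    have hl : lam ≠ 1 := Finset.ne_of_mem_erase hlam
    have hl' : lam⁻¹ ≠ 1 := inv_ne_one.mpr hl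
    rw [gaussSumN_eq (E := E), hasse_davenport _ _ hl', hfr, gaussSumN_self, mul_assoc, mul_assoc,
      ← mul_assoc (_ ^ t), gauss_jacobi _ (psiF_prim p) lam hl t ht0, neg_pow a0, mul_assoc ((-1 : F) ^ t),
      map_mul lam ((-1) ^ t)]
    ring

end
end

section
/- Assume s = 2, p ∤ (m/t), d | h, and a = 0. Then: if (d,l) = (1,1) then N_t = (q^{t−1} − 1)/2; if (d,l) = (1,2) then N_t = (1/2)·( q^{t−1} − 1 − (q−1)·(−1)^h·q^{(t−2)/2}·ρ((−1)^{t/2}) ); if (d,l) = (2,1) then N_t = q^{t−1} − 1. -/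
noncomputable section

open Complex Polynomial Classical

/-- `N_t(a,s,h)`: the number of elements `x` of the subfield `F_{q^t}` of `K = F_{q^m}`
with `Tr_{K/F}(x) = a` and `N_{K/F}(x) ∈ g^h·⟨g^s⟩`. -/
def NN (F K : Type*) [Field F] [Fintype F] [Field K] [Fintype K] [Algebra F K]
    (g : F) (s h t : ℕ) (a : F) : ℕ :=
  Nat.card {x : K // x ^ (Fintype.card F) ^ t = x ∧ Algebra.trace F K x = a ∧
    ∃ k : ℕ, Algebra.norm F x = g ^ (h + s * k)}

lemma aux_inter (F K : Type*) [Field F] [Fintype F] [Field K] [Finite K] [Algebra F K] (t : ℕ)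
    (ht0 : 0 < t) (ht : t ∣ Module.finrank F K) :
    ∃ E : IntermediateField F K, Module.finrank F E = t ∧ ∀ x : K, x ∈ E ↔ x ^ (Fintype.card F) ^ t = x := by
  let σ := FiniteField.frobeniusAlgEquivOfAlgebraic F K
  have ho : orderOf σ = Module.finrank F K := FiniteField.orderOf_frobeniusAlgEquivOfAlgebraic F K
  have hpos : 0 < Module.finrank F K := Module.finrank_pos
  refine ⟨IntermediateField.fixedField (Subgroup.zpowers (σ ^ t)), ?_, ?_⟩
  · have h1 := IntermediateField.finrank_fixedField_eq_card (Subgroup.zpowers (σ ^ t))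
    rw [Nat.card_zpowers, orderOf_pow_of_dvd ht0.ne' (ho ▸ ht), ho] at h1
    have h2 := Module.finrank_mul_finrank F (IntermediateField.fixedField (Subgroup.zpowers (σ ^ t))) K
    rw [h1] at h2
    obtain ⟨c, hc⟩ := ht
    rw [hc, Nat.mul_div_cancel_left _ ht0] at h2
    have : 0 < c := by
      rcases Nat.eq_zero_or_pos c with h | h
      · simp [h] at hc; omega
      · exact h
    exact Nat.eq_of_mul_eq_mul_right this h2
  · intro x
    have hx : (σ ^ t) x = x ^ (Fintype.card F) ^ t := by
      rw [AlgEquiv.coe_pow, FiniteField.coe_frobeniusAlgEquivOfAlgebraic_iterate]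
    rw [← hx, IntermediateField.mem_fixedField_iff]
    constructor
    · intro h
      exact h _ (Subgroup.mem_zpowers _)
    · intro h f hf
      have : Subgroup.zpowers (σ ^ t) ≤ MulAction.stabilizer (Gal(K/F)) x := by
        rw [Subgroup.zpowers_le]
        exact h
      exact this hf

lemma aux_ker (F E : Type*) [Field F] [Fintype F] [DecidableEq F] [Field E] [Fintype E] [Algebra F E] :
    (Finset.univ.filter (fun x : E => Algebra.trace F E x = 0)).card
      = Fintype.card F ^ (Module.finrank F E - 1) := by
  have h := LinearMap.finrank_range_add_finrank_ker (Algebra.trace F E)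
  rw [LinearMap.range_eq_top.mpr (Algebra.trace_surjective F E), finrank_top, Module.finrank_self] at h
  have h2 : Fintype.card (LinearMap.ker (Algebra.trace F E)) = _ := Module.card_eq_pow_finrank (K := F)
  rw [← h, Nat.add_sub_cancel_left, ← h2, Fintype.card_subtype]
  congr

lemma aux_eta_exists (F E : Type*) [Field F] [Fintype F] [DecidableEq F] [Field E] [Finite E] [Algebra F E]
    (h2 : ringChar F ≠ 2) : ∃ y : E, y ≠ 0 ∧ quadraticChar F (Algebra.norm F y) = -1 := by
  obtain ⟨a, ha⟩ := quadraticChar_exists_neg_one h2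
  obtain ⟨y, hy⟩ := FiniteField.norm_surjective F E a
  refine ⟨y, ?_, by rw [hy, ha]⟩
  rintro rfl
  rw [Algebra.norm_zero] at hy
  rw [← hy] at ha
  simp at ha

lemma aux_eta_sum (F E : Type*) [Field F] [Fintype F] [DecidableEq F] [Field E] [Fintype E] [Algebra F E]
    (h2 : ringChar F ≠ 2) : ∑ x : E, quadraticChar F (Algebra.norm F x) = 0 := by
  obtain ⟨y, hy0, hy⟩ := aux_eta_exists F E h2
  have := Fintype.sum_equiv (Equiv.mulLeft₀ y hy0)
    (fun x => quadraticChar F (Algebra.norm F (y * x))) (fun x : E => quadraticChar F (Algebra.norm F x))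
    (fun x => rfl)
  simp only [map_mul, hy, neg_mul, one_mul, Finset.sum_neg_distrib] at this
  omega

/-- nonsquares have eta = -1 -/
lemma aux_eta_nonsq (F E : Type*) [Field F] [Fintype F] [DecidableEq F] [Field E] [Fintype E] [Algebra F E]
    (h2 : ringChar F ≠ 2) (n : E) (hn : ¬ IsSquare n) : quadraticChar F (Algebra.norm F n) = -1 := by
  obtain ⟨y, hy0, hy⟩ := aux_eta_exists F E h2
  have hn0 : n ≠ 0 := by rintro rfl; exact hn IsSquare.zero
  have hy2 : ¬ IsSquare y := by
    rintro ⟨z, rfl⟩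
    have hz : Algebra.norm F z ≠ 0 := by
      rw [Algebra.norm_ne_zero_iff]; rintro rfl; simp at hy0
    have := quadraticChar_sq_one hz
    rw [map_mul, map_mul, ← sq, this] at hy
    norm_num at hy
  have : IsSquare (n * y) := by
    rw [← quadraticChar_one_iff_isSquare (mul_ne_zero hn0 hy0), map_mul,
      quadraticChar_neg_one_iff_not_isSquare.mpr hn, quadraticChar_neg_one_iff_not_isSquare.mpr hy2]
    norm_num
  obtain ⟨z, hz⟩ := this
  have hz0 : Algebra.norm F z ≠ 0 := by
    rw [Algebra.norm_ne_zero_iff]; rintro rfl; simp [hn0, hy0] at hz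
  have h3 := congrArg (fun x => quadraticChar F (Algebra.norm F x)) hz
  have h4 := quadraticChar_sq_one hz0
  simp only [map_mul, hy] at h3
  rw [← sq, h4] at h3
  omega

lemma aux_S_odd (F E : Type*) [Field F] [Fintype F] [DecidableEq F] [Field E] [Fintype E] [Algebra F E]
    (h2 : ringChar F ≠ 2) (hodd : Odd (Module.finrank F E)) :
    ∑ x : E with Algebra.trace F E x = 0, quadraticChar F (Algebra.norm F x) = 0 := by
  obtain ⟨a, ha⟩ := quadraticChar_exists_neg_one h2
  have ha0 : a ≠ 0 := by rintro rfl; simp at ha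
  have hy0 : algebraMap F E a ≠ 0 := by simpa using ha0
  rw [Finset.sum_filter]
  have := Fintype.sum_equiv (Equiv.mulLeft₀ _ hy0)
    (fun x => if Algebra.trace F E (algebraMap F E a * x) = 0 then
      quadraticChar F (Algebra.norm F (algebraMap F E a * x)) else 0)
    (fun x : E => if Algebra.trace F E x = 0 then quadraticChar F (Algebra.norm F x) else 0)
    (fun x => rfl)
  have e1 : ∀ x, Algebra.trace F E (algebraMap F E a * x) = a * Algebra.trace F E x := by
    intro x
    rw [← Algebra.smul_def, map_smul, smul_eq_mul]
  simp only [e1, map_mul, Algebra.norm_algebraMap, map_pow, ha, hodd.neg_one_pow,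
    mul_eq_zero, ha0, false_or, neg_mul, one_mul] at this
  have h5 : ∀ x : E, (if Algebra.trace F E x = 0 then -quadraticChar F (Algebra.norm F x) else 0)
     = - (if Algebra.trace F E x = 0 then quadraticChar F (Algebra.norm F x) else 0) := by
    intro x; split_ifs <;> simp
  simp only [h5, Finset.sum_neg_distrib] at this
  omega

lemma aux_quad (F L E : Type*) [Field F] [Fintype F] [DecidableEq F] [Field L] [Fintype L]
    [Field E] [Fintype E] [Algebra F E] [Algebra F L] [Algebra L E] [IsScalarTower F L E]
    (h2 : ringChar F ≠ 2) (hq : Module.finrank L E = 2) (x : E) (hx0 : x ≠ 0)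
    (hx : Algebra.trace L E x = 0) :
    quadraticChar F (Algebra.norm F x) = - quadraticChar F ((-1) ^ (Module.finrank F L)) := by
  have htr := FiniteField.algebraMap_trace_eq_sum_pow L E x
  have hno := FiniteField.algebraMap_norm_eq_prod_pow L E x
  have h2E : (2 : E) ≠ 0 := by
    have : (2 : F) ≠ 0 := Ring.two_ne_zero h2
    have h3 := (map_ne_zero (algebraMap F E)).mpr this
    rwa [map_ofNat] at h3
  rw [hx, hq] at htr
  rw [hq] at hno
  simp [Finset.sum_range_succ, Finset.prod_range_succ] at htr hno
  have hxq : x ^ Fintype.card L = -x := by linear_combination -htr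
  rw [hxq] at hno
  have hnsq : ¬ IsSquare (- Algebra.norm L x) := by
    rintro ⟨y, hy⟩
    have h3 : x * x = algebraMap L E y * algebraMap L E y := by
      rw [← map_mul, ← hy, map_neg, hno]; ring
    have h4 : x ∈ Set.range (algebraMap L E) := by
      rcases mul_self_eq_mul_self_iff.mp h3 with h | h
      · exact ⟨y, h.symm⟩
      · exact ⟨-y, by rw [h, map_neg]⟩
    obtain ⟨z, rfl⟩ := h4
    rw [← map_pow, FiniteField.pow_card] at hxq
    have : (2 : E) * algebraMap L E z = 0 := by linear_combination hxq
    rcases mul_eq_zero.mp this with h | h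
    · exact h2E h
    · exact hx0 h
  have h5 := aux_eta_nonsq F L h2 _ hnsq
  have h6 : Algebra.norm F (-1 : L) = (-1) ^ (Module.finrank F L) := by
    have := Algebra.norm_algebraMap (S := L) (-1 : F)
    simpa using this
  rw [← neg_one_mul, map_mul, map_mul, h6, Algebra.norm_norm] at h5
  have h7 : quadraticChar F ((-1) ^ (Module.finrank F L)) ^ 2 = 1 := quadraticChar_sq_one (by simp)
  linear_combination quadraticChar F ((-1) ^ (Module.finrank F L)) * h5 - quadraticChar F (Algebra.norm F x) * h7

lemma aux_S_even0 (F L E : Type*) [Field F] [Fintype F] [DecidableEq F] [Field L] [Fintype L] [DecidableEq L]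
    [Field E] [Fintype E] [Algebra F E] [Algebra F L] [Algebra L E] [IsScalarTower F L E]
    (h2 : ringChar F ≠ 2) (hq : Module.finrank L E = 2) :
    ∑ x : E with Algebra.trace F E x = 0, quadraticChar F (Algebra.norm F x) =
      - quadraticChar F ((-1) ^ (Module.finrank F L)) * 
      (((Fintype.card F : ℤ) - 1) * (Fintype.card F : ℤ) ^ (Module.finrank F L - 1)) := by
  set ε := - quadraticChar F ((-1) ^ (Module.finrank F L)) with hε
  set A : L → ℤ := fun c => ∑ x : E with Algebra.trace L E x = c, quadraticChar F (Algebra.norm F x) with hA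
  have hQ : Fintype.card L = Fintype.card F ^ Module.finrank F L := Module.card_eq_pow_finrank
  have hk : 0 < Module.finrank F L := by
    have : Module.Finite F L := Module.Finite.of_finite
    exact Module.finrank_pos
  have hA0 : A 0 = ((Fintype.card L : ℤ) - 1) * ε := by
    have hc := aux_ker L E
    rw [hq] at hc
    simp only [hA]
    have h0 : (0 : E) ∈ Finset.univ.filter (fun x : E => Algebra.trace L E x = 0) := by simp
    rw [← Finset.add_sum_erase _ _ h0]
    rw [Finset.sum_congr rfl (g := fun _ => ε)]
    · rw [Finset.sum_const, Finset.card_erase_of_mem h0, hc]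
      have : 1 ≤ Fintype.card L := Fintype.card_pos
      simp
      left
      push_cast [this]; ring
    · intro x hx
      simp at hx
      exact aux_quad F L E h2 hq x hx.1 hx.2
  have hA1 : ∀ c, c ≠ 0 → A c = A 1 := by
    intro c hc
    have hy0 : algebraMap L E c ≠ 0 := by simpa using hc
    simp only [hA, Finset.sum_filter]
    symm
    apply Fintype.sum_equiv (Equiv.mulLeft₀ _ hy0)
    intro x
    have e1 : Algebra.trace L E (algebraMap L E c * x) = c * Algebra.trace L E x := by
      rw [← Algebra.smul_def, map_smul, smul_eq_mul]
    have e2 : quadraticChar F (Algebra.norm F (algebraMap L E c * x)) = quadraticChar F (Algebra.norm F x) := by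
      rw [map_mul, map_mul, ← Algebra.norm_norm (S := L) (a := algebraMap L E c), Algebra.norm_algebraMap, hq, map_pow, map_pow,
        quadraticChar_sq_one, one_mul]
      have : Module.Finite F L := Module.Finite.of_finite
      rwa [Algebra.norm_ne_zero_iff]
    simp only [Equiv.mulLeft₀_apply, e1, e2, mul_eq_left₀ hc]
  have hsum : ∑ c, A c = 0 := by
    simp only [hA]
    rw [Finset.sum_fiberwise, aux_eta_sum F E h2]
  have hsplit : ∀ s : Finset L, 0 ∈ s → ∑ c ∈ s, A c = A 0 + ((s.card : ℤ) - 1) * A 1 := by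
    intro s hs
    rw [← Finset.add_sum_erase _ _ hs, Finset.sum_congr rfl (g := fun _ => A 1)]
    · rw [Finset.sum_const, Finset.card_erase_of_mem hs]
      have : 1 ≤ s.card := Finset.card_pos.mpr ⟨0, hs⟩
      simp
      left
      push_cast [this]; ring
    · intro x hx
      exact hA1 x (Finset.ne_of_mem_erase hx)
  have hL : (1 : ℤ) < Fintype.card L := by exact_mod_cast Fintype.one_lt_card
  rw [hsplit _ (Finset.mem_univ _), hA0, Finset.card_univ, ← mul_add] at hsum
  have hA1' : A 1 = - ε := by
    rcases mul_eq_zero.mp hsum with h | h <;> linarith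
  have hmain : ∑ x : E with Algebra.trace F E x = 0, quadraticChar F (Algebra.norm F x)
      = ∑ c : L with Algebra.trace F L c = 0, A c := by
    simp only [hA]
    rw [← Finset.sum_fiberwise_of_maps_to (s := Finset.univ.filter (fun x : E => Algebra.trace F E x = 0))
      (t := Finset.univ.filter (fun c : L => Algebra.trace F L c = 0)) (g := Algebra.trace L E)]
    · apply Finset.sum_congr rfl
      intro c hc
      apply Finset.sum_congr _ (fun _ _ => rfl)
      ext x
      simp only [Finset.mem_filter, Finset.mem_univ, true_and] at hc ⊢
      constructor
      · exact fun h => h.2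
      · rintro rfl
        refine ⟨?_, rfl⟩
        rw [← Algebra.trace_trace (S := L), hc]
    · intro x hx
      simp only [Finset.mem_filter, Finset.mem_univ, true_and] at hx ⊢
      rw [Algebra.trace_trace, hx]
  rw [hmain, hsplit _ (by simp), hA0, hA1', aux_ker F L, hQ]
  obtain ⟨k, hk'⟩ : ∃ k, Module.finrank F L = k + 1 := ⟨_, (Nat.succ_pred_eq_of_pos hk).symm⟩
  rw [hk', Nat.add_sub_cancel]
  push_cast
  ring

lemma aux_S_even (F E : Type*) [Field F] [Fintype F] [DecidableEq F] [Field E] [Fintype E] [Algebra F E]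
    (h2 : ringChar F ≠ 2) (k : ℕ) (hk : Module.finrank F E = 2 * k) :
    ∑ x : E with Algebra.trace F E x = 0, quadraticChar F (Algebra.norm F x) =
      - quadraticChar F ((-1) ^ k) * (((Fintype.card F : ℤ) - 1) * (Fintype.card F : ℤ) ^ (k - 1)) := by
  have hpos : 0 < Module.finrank F E := Module.finrank_pos
  have hk0 : 0 < k := by omega
  obtain ⟨L, hL, -⟩ := aux_inter F E k hk0 (by rw [hk]; exact dvd_mul_left _ _)
  have h3 := Module.finrank_mul_finrank F L E
  rw [hL, hk, mul_comm 2 k] at h3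
  have := aux_S_even0 F L E h2 (Nat.eq_of_mul_eq_mul_left hk0 h3)
  rw [hL] at this
  exact this

lemma aux_coset (F : Type*) [Field F] [Fintype F] [DecidableEq F] (h2 : ringChar F ≠ 2)
    (g : Fˣ) (hg : ∀ u : Fˣ, u ∈ Subgroup.zpowers g) (h : ℕ) (hh : h < 2) (y : F) :
    (∃ k : ℕ, y = (g : F) ^ (h + 2 * k)) ↔ quadraticChar F y = (-1) ^ h := by
  have hpow : ∀ u : Fˣ, ∃ j : ℕ, u = g ^ j := by
    intro u
    obtain ⟨j, hj⟩ := (mem_powers_iff_mem_zpowers.mpr (hg u))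
    exact ⟨j, hj.symm⟩
  have hgm : quadraticChar F (g : F) = -1 := by
    obtain ⟨a, ha⟩ := quadraticChar_exists_neg_one' h2
    obtain ⟨j, rfl⟩ := hpow a
    rcases quadraticChar_dichotomy (F := F) (a := g) g.ne_zero with h | h
    · rw [Units.val_pow_eq_pow_val, map_pow, h, one_pow] at ha
      norm_num at ha
    · exact h
  constructor
  · rintro ⟨k, rfl⟩
    rw [map_pow, hgm, pow_add, pow_mul]; simp
  · intro hy
    have hy0 : y ≠ 0 := by
      rintro rfl
      rw [quadraticChar_zero] at hy
      exact pow_ne_zero h (by norm_num) hy.symm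
    obtain ⟨j, hj⟩ := hpow (Units.mk0 y hy0)
    have hj' : y = (g : F) ^ j := by
      have := congrArg Units.val hj
      simpa using this
    rw [hj', map_pow, hgm] at hy
    have hjh : j % 2 = h := by
      rcases Nat.even_or_odd j with he | he
      · rw [he.neg_one_pow] at hy
        have := Nat.even_iff.mp he
        interval_cases h
        · exact this
        · norm_num at hy
      · rw [he.neg_one_pow] at hy
        have := Nat.odd_iff.mp he
        interval_cases h
        · norm_num at hy
        · exact this
    exact ⟨j / 2, by rw [hj']; congr 1; omega⟩

lemma aux_count (F E : Type*) [Field F] [Fintype F] [DecidableEq F] [Field E] [Fintype E] [Algebra F E]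
    (h : ℕ) :
    2 * ((Finset.univ.filter (fun x : E => Algebra.trace F E x = 0 ∧
      quadraticChar F (Algebra.norm F x) = (-1) ^ h)).card : ℤ) =
     (Fintype.card F : ℤ) ^ (Module.finrank F E - 1) - 1 + (-1) ^ h *
      ∑ x : E with Algebra.trace F E x = 0, quadraticChar F (Algebra.norm F x) := by
  have hc := aux_ker F E
  have h0 : (0 : E) ∈ Finset.univ.filter (fun x : E => Algebra.trace F E x = 0) := by simp
  have key : ∀ x : E, x ≠ 0 → 2 * (if quadraticChar F (Algebra.norm F x) = (-1) ^ h then (1 : ℤ) else 0)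
      = 1 + (-1) ^ h * quadraticChar F (Algebra.norm F x) := by
    intro x hx
    have := (Algebra.norm_ne_zero_iff (R := F) (x := x)).mpr hx
    rcases quadraticChar_dichotomy this with e | e <;> rcases neg_one_pow_eq_or ℤ h with e' | e' <;>
      rw [e, e'] <;> norm_num
  rw [← Finset.filter_filter, Finset.card_filter, Nat.cast_sum, Finset.mul_sum, Finset.mul_sum,
    ← Finset.add_sum_erase _ _ h0, ← Finset.add_sum_erase _ _ h0]
  rw [Finset.sum_congr rfl (g := fun x => 1 + (-1) ^ h * quadraticChar F (Algebra.norm F x))]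
  · rw [Finset.sum_add_distrib, Finset.sum_const, Finset.card_erase_of_mem h0, hc]
    have h1 : 1 ≤ Fintype.card F ^ (Module.finrank F E - 1) := Nat.one_le_pow _ _ Fintype.card_pos
    have h3 : ¬ ((0 : ℤ) = (-1) ^ h) := by
      intro hh; simpa using hh.symm
    simp [h3, Algebra.norm_zero]
    push_cast [h1]; ring
  · intro x hx
    rw [← key x (Finset.ne_of_mem_erase hx)]
    push_cast; rfl

/-- The values of `N_t` for `s = 2`, `a = 0`, assuming `p ∤ m/t` and `d ∣ h`,
where `d = gcd(m/t, 2)`, `l = gcd(t, 2/d)` and `ρ` is the quadratic character of `F`. -/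
theorem stmt8 (p r m h t d l : ℕ) [Fact p.Prime] (hr : 0 < r) (hm : 2 ≤ m)
    (ht : t ∣ m) (ht0 : 0 < t)
    (F K : Type*) [Field F] [Fintype F] [DecidableEq F] [Field K] [Fintype K] [Algebra F K]
    (hF : Fintype.card F = p ^ r) (hK : Fintype.card K = Fintype.card F ^ m)
    (g : Fˣ) (hg : ∀ u : Fˣ, u ∈ Subgroup.zpowers g)
    (hsq : 2 ∣ Fintype.card F - 1) (hh : h < 2)
    (hd : d = Nat.gcd (m / t) 2) (hl : l = Nat.gcd t (2 / d))
    (hpmt : ¬ p ∣ m / t) (hdh : d ∣ h)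
    (a : F) (ha : a = 0) :
    (d = 1 ∧ l = 1 →
      (NN F K (g : F) 2 h t a : ℚ) = ((Fintype.card F : ℚ) ^ (t - 1) - 1) / 2) ∧
    (d = 1 ∧ l = 2 →
      (NN F K (g : F) 2 h t a : ℚ) =
        (1 / 2) * ((Fintype.card F : ℚ) ^ (t - 1) - 1 -
          ((Fintype.card F : ℚ) - 1) * (-1 : ℚ) ^ h * (Fintype.card F : ℚ) ^ ((t - 2) / 2) *
            (quadraticChar F ((-1 : F) ^ (t / 2)) : ℚ))) ∧
    (d = 2 ∧ l = 1 →
      (NN F K (g : F) 2 h t a : ℚ) = (Fintype.card F : ℚ) ^ (t - 1) - 1) := by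
  have hq1 : 1 < Fintype.card F := Fintype.one_lt_card
  have h2 : ringChar F ≠ 2 := by
    rw [Ne, FiniteField.even_card_iff_char_two]
    omega
  have hchar : CharP F p := charP_of_card_eq_prime_pow hF
  have hfin : Module.Finite F K := Module.Finite.of_finite
  have hfr : Module.finrank F K = m := by
    have h3 : Fintype.card K = Fintype.card F ^ Module.finrank F K := Module.card_eq_pow_finrank
    rw [hK] at h3
    exact (Nat.pow_right_injective hq1 h3).symm
  obtain ⟨E, hE, hmem⟩ := aux_inter F K t ht0 (hfr ▸ ht)
  have hEK : Module.finrank E K = m / t := by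
    have h3 := Module.finrank_mul_finrank F E K
    rw [hE, hfr] at h3
    rw [← h3, Nat.mul_div_cancel_left _ ht0]
  have hmt : ((m / t : ℕ) : F) ≠ 0 := by
    rwa [Ne, CharP.cast_eq_zero_iff F p]
  have hNN : NN F K (g : F) 2 h t a = (Finset.univ.filter (fun x : E => Algebra.trace F E x = 0 ∧
      quadraticChar F (Algebra.norm F x) ^ (m / t) = (-1) ^ h)).card := by
    rw [← Fintype.card_subtype, ← Nat.card_eq_fintype_card, NN]
    symm
    have htr : ∀ x : E, Algebra.trace F K (x : K) = ((m / t : ℕ) : F) * Algebra.trace F E x := by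
      intro x
      rw [← Algebra.trace_trace (S := E)]
      have := Algebra.trace_algebraMap (S := K) x
      rw [hEK] at this
      rw [show Algebra.trace E K (x : K) = _ from this, map_nsmul, nsmul_eq_mul]
    have hno : ∀ x : E, Algebra.norm F (x : K) = Algebra.norm F x ^ (m / t) := by
      intro x
      rw [← Algebra.norm_norm (S := E)]
      have := Algebra.norm_algebraMap (S := K) x
      rw [hEK] at this
      rw [show Algebra.norm E (x : K) = _ from this, map_pow]
    have hiff : ∀ x : E, (Algebra.trace F E x = 0 ∧
        quadraticChar F (Algebra.norm F x) ^ (m / t) = (-1) ^ h) ↔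
        (Algebra.trace F K (x : K) = a ∧
          ∃ k : ℕ, Algebra.norm F (x : K) = (g : F) ^ (h + 2 * k)) := by
      intro x
      rw [aux_coset F h2 g hg h hh, htr, hno, ha, map_pow, mul_eq_zero, or_iff_right hmt]
    apply Nat.card_congr
    exact
      { toFun := fun x => ⟨x.1.1, (hmem _).mp x.1.2, (hiff x.1).mp x.2⟩
        invFun := fun x => ⟨⟨x.1, (hmem _).mpr x.2.1⟩, (hiff ⟨x.1, (hmem _).mpr x.2.1⟩).mpr x.2.2⟩
        left_inv := fun x => rfl
        right_inv := fun x => rfl }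
  have hpar : d = 1 → NN F K (g : F) 2 h t a = (Finset.univ.filter (fun x : E => Algebra.trace F E x = 0 ∧
      quadraticChar F (Algebra.norm F x) = (-1) ^ h)).card := by
    intro hd1
    have hodd : Odd (m / t) := by
      rw [← Nat.coprime_two_right, Nat.coprime_iff_gcd_eq_one, ← hd, hd1]
    rw [hNN]
    congr 1
    apply Finset.filter_congr
    intro x _
    rcases quadraticChar_isQuadratic F (Algebra.norm F x) with e | e | e
    · rw [e, zero_pow hodd.pos.ne']
    · rw [e, one_pow]
    · rw [e, hodd.neg_one_pow]
  have hcount := aux_count F E h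
  rw [hE] at hcount
  refine ⟨?_, ?_, ?_⟩
  · rintro ⟨hd1, hl1⟩
    have hodd : Odd t := by
      rw [hd1] at hl
      rw [← Nat.coprime_two_right, Nat.coprime_iff_gcd_eq_one]
      rw [hl1] at hl
      simpa using hl.symm
    rw [aux_S_odd F E h2 (hE ▸ hodd), ← hpar hd1] at hcount
    have := congrArg (Int.cast : ℤ → ℚ) hcount
    push_cast at this
    linarith
  · rintro ⟨hd1, hl1⟩
    have heven : 2 ∣ t := by
      rw [hd1, hl1] at hl
      rw [hl]
      exact Nat.gcd_dvd_left _ _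
    obtain ⟨k, rfl⟩ := heven
    rw [aux_S_even F E h2 k hE, ← hpar hd1] at hcount
    have := congrArg (Int.cast : ℤ → ℚ) hcount
    have e1 : (2 * k - 2) / 2 = k - 1 := by omega
    have e2 : 2 * k / 2 = k := by omega
    rw [e1, e2]
    push_cast at this ⊢
    linarith
  · rintro ⟨hd2, -⟩
    have heven : Even (m / t) := by
      rw [even_iff_two_dvd]
      have := Nat.gcd_dvd_left (m / t) 2
      rwa [← hd, hd2] at this
    have hmt0 : m / t ≠ 0 := by
      intro h0
      simp [h0] at hmt
    have hh0 : h = 0 := by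
      rw [hd2] at hdh
      omega
    have h0 : (0 : E) ∈ Finset.univ.filter (fun x : E => Algebra.trace F E x = 0) := by simp
    have hc := aux_ker F E
    have : (Finset.univ.filter (fun x : E => Algebra.trace F E x = 0 ∧
      quadraticChar F (Algebra.norm F x) ^ (m / t) = (-1) ^ h)) =
      (Finset.univ.filter (fun x : E => Algebra.trace F E x = 0)).erase 0 := by
      ext x
      simp only [Finset.mem_filter, Finset.mem_univ, true_and, Finset.mem_erase]
      rw [and_comm, hh0, pow_zero]
      apply and_congr_left
      intro _
      constructor
      · rintro hx rfl
        rw [Algebra.norm_zero, quadraticChar_zero, zero_pow hmt0] at hx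
        norm_num at hx
      · intro hx
        have := (Algebra.norm_ne_zero_iff (R := F) (x := x)).mpr hx
        rcases quadraticChar_dichotomy this with e | e
        · rw [e, one_pow]
        · rw [e, heven.neg_one_pow]
    rw [hNN, this, Finset.card_erase_of_mem h0, hc, hE]
    have h1 : 1 ≤ Fintype.card F ^ (t - 1) := Nat.one_le_pow _ _ Fintype.card_pos
    push_cast [h1]
    ring

end
end

section
/- Assume s = 2, p ∤ (m/t), d | h, and a ≠ 0. Then: if (d,l) = (1,1) then N_t = (1/2)·( q^{t−1} + (−1)^h·q^{(t−1)/2}·ρ((−1)^{(t−1)/2}·(m/(t·a))) ), where m/(t·a) denotes (m/t mod p)·a^{−1} in F_q^*; if (d,l) = (1,2) then N_t = (1/2)·( q^{t−1} + (−1)^h·q^{(t−2)/2}·ρ((−1)^{t/2}) ); if (d,l) = (2,1) then N_t = q^{t−1}. -/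
noncomputable section
open Complex Polynomial Classical

section aux
variable {F : Type*} [Field F] [Fintype F] [DecidableEq F]

theorem aux_sq_sum (hF : ringChar F ≠ 2) (f : F → ℚ) :
    ∑ y : F, f (y ^ 2) = ∑ u : F, (1 + (quadraticChar F u : ℚ)) * f u := by
  rw [← Finset.sum_fiberwise (s := Finset.univ) (g := fun y : F => y ^ 2)]
  refine Finset.sum_congr rfl fun u _ => ?_
  rw [Finset.sum_congr rfl (g := fun _ => f u)]
  · rw [Finset.sum_const, nsmul_eq_mul]
    congr 1
    have := quadraticChar_card_sqrts hF u
    rw [add_comm]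
    have h2 : (Finset.univ.filter (fun y : F => y ^ 2 = u)) = {x : F | x ^ 2 = u}.toFinset := by
      ext; simp
    rw [h2]
    exact_mod_cast this
  · intro y hy
    rw [(Finset.mem_filter.mp hy).2]

theorem aux_char_sum (hF : ringChar F ≠ 2) (c : F) (_hc : c ≠ 0) :
    ∑ u : F, (quadraticChar F (c * u) : ℚ) = 0 := by
  simp only [map_mul, Int.cast_mul]
  rw [← Finset.mul_sum]
  have := quadraticChar_sum_zero hF
  rw [← Int.cast_sum, this]; simp

theorem aux_jac (hF : ringChar F ≠ 2) (b : F) :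
    ∑ u : F, (quadraticChar F (b - u) : ℚ) * (quadraticChar F u : ℚ) =
      (quadraticChar F (-1) : ℚ) * ((Fintype.card F : ℚ) * (if b = 0 then 1 else 0) - 1) := by
  by_cases hb : b = 0
  · subst hb
    have h1 : ∀ u : F, (quadraticChar F (0 - u) : ℚ) * (quadraticChar F u : ℚ) =
        (quadraticChar F (-1) : ℚ) * (if u = 0 then 0 else 1) := by
      intro u
      split_ifs with hu
      · simp [hu]
      · rw [show (0 - u) = (-1) * u by ring, map_mul]
        have := quadraticChar_sq_one hu
        push_cast
        rw [mul_assoc, ← pow_two]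
        congr 1
        exact_mod_cast this
    simp only [h1, ← Finset.mul_sum, if_true]
    congr 1
    have : ∀ u : F, (if u = 0 then (0:ℚ) else 1) = 1 - (if u = 0 then 1 else 0) := by
      intro u; split_ifs <;> simp
    simp [this]
  · have hj := jacobiSum_nontrivial_inv (quadraticChar_ne_one hF)
    rw [(quadraticChar_isQuadratic F).inv, jacobiSum] at hj
    rw [if_neg hb]
    have h1 : ∑ u : F, (quadraticChar F (b - u) : ℚ) * (quadraticChar F u : ℚ) =
        ∑ x : F, (quadraticChar F (b - b * x) : ℚ) * (quadraticChar F (b * x) : ℚ) :=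
      (Equiv.sum_comp (Equiv.mulLeft₀ b hb)
        (fun u => (quadraticChar F (b - u) : ℚ) * (quadraticChar F u : ℚ))).symm
    rw [h1]
    have h2 : ∀ x : F, (quadraticChar F (b - b * x) : ℚ) * (quadraticChar F (b * x) : ℚ) =
       ((quadraticChar F x * quadraticChar F (1 - x) : ℤ) : ℚ) := by
      intro x
      have := quadraticChar_sq_one hb
      rw [show b - b * x = b * (1 - x) by ring, map_mul, map_mul]
      have h3 : (quadraticChar F b : ℚ) ^ 2 = 1 := by exact_mod_cast this
      push_cast
      linear_combination ((quadraticChar F x : ℚ) * (quadraticChar F (1 - x) : ℚ)) * h3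
    simp only [h2]
    rw [← Int.cast_sum, hj]
    push_cast; ring

/-- error term -/
def auxE (n : ℕ) (δ b : F) : ℚ :=
  if Even n then (Fintype.card F : ℚ) ^ (n / 2) * (quadraticChar F ((-1) ^ (n / 2) * δ) : ℚ) *
      ((if b = 0 then 1 else 0) - 1 / (Fintype.card F : ℚ))
  else (Fintype.card F : ℚ) ^ (n / 2) * (quadraticChar F ((-1) ^ (n / 2) * δ * b) : ℚ)

theorem auxE_step (hF : ringChar F ≠ 2) (n : ℕ) (δ b c : F) (hc : c ≠ 0) :
    ∑ u : F, auxE n δ (b - c * u) * (quadraticChar F u : ℚ) = auxE (n + 1) (c * δ) b := by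
  have hq : (Fintype.card F : ℚ) ≠ 0 := by exact_mod_cast Fintype.card_ne_zero
  have hc2 : (quadraticChar F c : ℚ) ^ 2 = 1 := by exact_mod_cast quadraticChar_sq_one hc
  have hre : ∀ G : F → ℚ, ∑ u : F, G (c * u) = ∑ u : F, G u := fun G =>
    Equiv.sum_comp (Equiv.mulLeft₀ c hc) G
  have hcu : ∀ u : F, (quadraticChar F u : ℚ) = quadraticChar F c * quadraticChar F (c * u) := by
    intro u
    rw [map_mul]; push_cast
    linear_combination -(quadraticChar F u : ℚ) * hc2
  have e1 : ∑ u : F, auxE n δ (b - c * u) * (quadraticChar F u : ℚ) =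
      quadraticChar F c * ∑ u : F, auxE n δ (b - u) * (quadraticChar F u : ℚ) := by
    rw [← hre (fun u => auxE n δ (b - u) * (quadraticChar F u : ℚ)), Finset.mul_sum]
    refine Finset.sum_congr rfl fun u _ => ?_
    rw [hcu u]; ring
  rw [e1]
  rcases Nat.even_or_odd' n with ⟨k, rfl | rfl⟩
  · have h1 : Even (2 * k) := even_two_mul k
    have h2 : ¬ Even (2 * k + 1) := by simp
    have h3 : 2 * k / 2 = k := by omega
    have h4 : (2 * k + 1) / 2 = k := by omega
    simp only [auxE, if_pos h1, if_neg h2, h3, h4]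
    have : ∀ u : F, (Fintype.card F : ℚ) ^ k * (quadraticChar F ((-1) ^ k * δ) : ℚ) *
      ((if b - u = 0 then 1 else 0) - 1 / (Fintype.card F : ℚ)) * (quadraticChar F u : ℚ) =
      (Fintype.card F : ℚ) ^ k * (quadraticChar F ((-1) ^ k * δ) : ℚ) *
      ((if b = u then (quadraticChar F u : ℚ) else 0)
        - 1 / (Fintype.card F : ℚ) * (quadraticChar F (1 * u) : ℚ)) := by
      intro u
      simp only [sub_eq_zero, one_mul]
      split_ifs <;> ring
    simp only [this]
    rw [← Finset.mul_sum, Finset.sum_sub_distrib, ← Finset.mul_sum, aux_char_sum hF 1 one_ne_zero]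
    simp only [Finset.sum_ite_eq, Finset.mem_univ, if_true, map_mul]
    push_cast; ring
  · have h1 : Even (2 * k + 1 + 1) := by rw [show 2 * k + 1 + 1 = 2 * (k + 1) by ring]; simp
    have h2 : ¬ Even (2 * k + 1) := by simp
    have h3 : (2 * k + 1 + 1) / 2 = k + 1 := by omega
    have h4 : (2 * k + 1) / 2 = k := by omega
    simp only [auxE, if_pos h1, if_neg h2, h3, h4]
    have : ∀ u : F, (Fintype.card F : ℚ) ^ k * (quadraticChar F ((-1) ^ k * δ * (b - u)) : ℚ) *
       (quadraticChar F u : ℚ) =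
      (Fintype.card F : ℚ) ^ k * (quadraticChar F ((-1) ^ k * δ) : ℚ) *
      ((quadraticChar F (b - u) : ℚ) * (quadraticChar F u : ℚ)) := by
      intro u
      rw [map_mul]; push_cast; ring
    simp only [this]
    rw [← Finset.mul_sum, aux_jac hF, pow_succ (-1 : F) k]
    simp only [map_mul]
    push_cast
    field_simp
    ring

theorem aux_count_s9 (hF : ringChar F ≠ 2) (n : ℕ) (c : Fin n → F) (hc : ∀ i, c i ≠ 0) (b : F) :
    ∑ y : Fin n → F, (if ∑ i, c i * y i ^ 2 = b then (1 : ℚ) else 0) =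
      (Fintype.card F : ℚ) ^ n / Fintype.card F + auxE n (∏ i, c i) b := by
  have hq : (Fintype.card F : ℚ) ≠ 0 := by exact_mod_cast Fintype.card_ne_zero
  induction n generalizing b with
  | zero =>
    simp [auxE, eq_comm]
  | succ n ih =>
    rw [← (Fin.consEquiv (fun _ : Fin (n + 1) => F)).sum_comp, Fintype.sum_prod_type]
    simp only [Fin.consEquiv_apply, Fin.sum_univ_succ, Fin.cons_zero, Fin.cons_succ]
    have h1 : ∀ x : F, ∑ y : Fin n → F,
        (if c 0 * x ^ 2 + ∑ i : Fin n, c i.succ * y i ^ 2 = b then (1 : ℚ) else 0) =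
        (Fintype.card F : ℚ) ^ n / Fintype.card F + auxE n (∏ i : Fin n, c i.succ) (b - c 0 * x ^ 2) := by
      intro x
      rw [← ih (fun i => c i.succ) (fun i => hc _)]
      refine Finset.sum_congr rfl fun y _ => ?_
      simp only [eq_sub_iff_add_eq']
    simp only [h1]
    rw [aux_sq_sum hF (fun u => (Fintype.card F : ℚ) ^ n / Fintype.card F +
      auxE n (∏ i : Fin n, c i.succ) (b - c 0 * u)), Fin.prod_univ_succ,
      ← auxE_step hF _ _ _ _ (hc 0)]
    have h2 : ∑ u : F, ((Fintype.card F : ℚ) ^ n / Fintype.card F +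
      auxE n (∏ i : Fin n, c i.succ) (b - c 0 * u)) = Fintype.card F ^ n := by
      have : ∀ u : F, (Fintype.card F : ℚ) ^ n / Fintype.card F +
          auxE n (∏ i : Fin n, c i.succ) (b - c 0 * u) = ∑ y : Fin n → F,
        (if ∑ i : Fin n, c i.succ * y i ^ 2 = b - c 0 * u then (1 : ℚ) else 0) := by
        intro u
        rw [← ih (fun i => c i.succ) (fun i => hc _)]
      simp only [this]
      rw [Finset.sum_comm]
      have h3 : ∀ y : Fin n → F, ∑ u : F, 
        (if ∑ i : Fin n, c i.succ * y i ^ 2 = b - c 0 * u then (1 : ℚ) else 0) = 1 := by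
        intro y
        have : ∀ u : F, (∑ i : Fin n, c i.succ * y i ^ 2 = b - c 0 * u) ↔ 
            (c 0)⁻¹ * (b - ∑ i : Fin n, c i.succ * y i ^ 2) = u := by
          intro u
          have := hc 0
          constructor
          · intro h; rw [h]; field_simp; ring
          · rintro rfl; field_simp; ring
        simp [this]
      simp [h3]
    simp only [add_mul, one_mul, Finset.sum_add_distrib] at h2 ⊢
    rw [h2]
    have h4 := aux_char_sum hF (1 : F) one_ne_zero
    simp only [one_mul] at h4
    simp only [mul_add, Finset.sum_add_distrib]
    rw [← Finset.sum_mul, h4, zero_mul, zero_add, pow_succ, mul_div_assoc, div_self hq, mul_one]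
    congr 1
    exact Finset.sum_congr rfl fun u _ => mul_comm _ _
end aux
section aux2
variable {F E : Type*} [Field F] [Fintype F] [DecidableEq F] [Field E] [Fintype E] [Algebra F E]

theorem aux_norm (hF : ringChar F ≠ 2) (x : E) :
    quadraticChar F (Algebra.norm F x) = quadraticChar E x := by
  by_cases hx : x = 0
  · subst hx; rw [Algebra.norm_zero]; simp
  have hN : Algebra.norm F x ≠ 0 := Algebra.norm_ne_zero_iff.mpr hx
  have hE : ringChar E ≠ 2 := by
    rwa [← Algebra.ringChar_eq F E]
  rw [quadraticChar_eq_pow_of_char_ne_two hF hN, quadraticChar_eq_pow_of_char_ne_two hE hx]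
  congr 1
  rw [← (algebraMap F E).injective.eq_iff, map_pow, map_one, FiniteField.algebraMap_norm_eq_pow,
    ← pow_mul, Nat.card_eq_fintype_card, Nat.card_eq_fintype_card]
  have h1 := FiniteField.odd_card_of_char_ne_two hF
  have h2 := FiniteField.odd_card_of_char_ne_two hE
  have h3 : Fintype.card F - 1 ∣ Fintype.card E - 1 := by
    rw [Module.card_eq_pow_finrank (K := F) (V := E)]
    simpa using Nat.sub_dvd_pow_sub_pow (Fintype.card F) 1 (Module.finrank F E)
  obtain ⟨k, hk⟩ := h3
  have h4 := Fintype.one_lt_card (α := F)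
  have h5 : (Fintype.card E - 1) / (Fintype.card F - 1) = k := by
    rw [hk]; exact Nat.mul_div_cancel_left _ (by omega)
  rw [h5]
  obtain ⟨u, hu⟩ : ∃ u, Fintype.card F = 2 * u + 1 := ⟨Fintype.card F / 2, by omega⟩
  obtain ⟨v, hv⟩ : ∃ v, Fintype.card E = 2 * v + 1 := ⟨Fintype.card E / 2, by omega⟩
  rw [hu, hv] at hk ⊢
  rw [show (2 * u + 1) / 2 = u by omega, show (2 * v + 1) / 2 = v by omega]
  have : k * u = v := by
    simp only [Nat.add_sub_cancel] at hk
    nlinarith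
  rw [this]

theorem aux_disc (hF : ringChar F ≠ 2) (v : Module.Basis (Fin (Module.finrank F E)) F E) :
    quadraticChar F (Algebra.discr F v) = (-1) ^ (Module.finrank F E - 1) := by
  have hE : ringChar E ≠ 2 := by
    rwa [← Algebra.ringChar_eq F E]
  let e : Fin (Module.finrank F E) ≃ (E →ₐ[F] E) :=
    Equiv.ofBijective _ (FiniteField.bijective_frobeniusAlgHom_pow F E)
  let φ := FiniteField.frobeniusAlgHom F E
  have hrot : ∀ i, φ.comp (e i) = e (finRotate _ i) := by
    intro i
    have hpos : 0 < Module.finrank F E := Module.finrank_pos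
    obtain ⟨n, hn⟩ : ∃ n, Module.finrank F E = n + 1 := ⟨Module.finrank F E - 1, by omega⟩
    have ho : φ ^ (Module.finrank F E) = 1 := by
      rw [← FiniteField.orderOf_frobeniusAlgHom F E]; exact pow_orderOf_eq_one _
    have h1 : φ.comp (e i) = φ ^ (i.1 + 1) := by
      rw [pow_succ']; rfl
    have h2 : e (finRotate _ i) = φ ^ ((finRotate _ i).1) := rfl
    rw [h1, h2]
    clear_value φ e
    generalize Module.finrank F E = N at *
    subst hn
    rw [finRotate_apply]
    by_cases hi : i = Fin.last n
    · subst hi; simp [ho]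
    · rw [Fin.val_add_one_of_lt (Fin.lt_last_iff_ne_last.mpr hi)]
  set D := (Algebra.embeddingsMatrixReindex F E v e).det with hD
  have hD2 : algebraMap F E (Algebra.discr F v) = D ^ 2 := by
    have hM : (algebraMap F E).mapMatrix (Algebra.traceMatrix F v) =
        Algebra.embeddingsMatrixReindex F E v e *
          (Algebra.embeddingsMatrixReindex F E v e).transpose := by
      ext i j
      rw [RingHom.mapMatrix_apply, Matrix.map_apply, Algebra.traceMatrix_apply,
        Algebra.traceForm_apply, trace_eq_sum_automorphisms,
        ← (FiniteField.bijective_frobeniusAlgEquivOfAlgebraic_pow F E).sum_comp, Matrix.mul_apply]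
      refine Finset.sum_congr rfl fun k _ => ?_
      rw [map_mul]
      have : ∀ x : E, (FiniteField.frobeniusAlgEquivOfAlgebraic F E ^ k.1) x = e k x := by
        intro x
        have h2 : e k = φ ^ k.1 := rfl
        rw [h2, AlgEquiv.coe_pow, AlgHom.coe_pow]
        rfl
      rw [this, this]
      rfl
    rw [Algebra.discr_def, RingHom.map_det, hM, Matrix.det_mul, Matrix.det_transpose, pow_two]
  have hdn : Algebra.discr F v ≠ 0 := Algebra.discr_not_zero_of_basis F v
  have hD0 : D ≠ 0 := by
    intro h
    rw [h] at hD2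
    simp at hD2
    exact hdn hD2
  have hφ : φ D = (-1) ^ (Module.finrank F E - 1) * D := by
    rw [hD, AlgHom.map_det]
    have : φ.mapMatrix (Algebra.embeddingsMatrixReindex F E v e) =
        (Algebra.embeddingsMatrixReindex F E v e).submatrix id (finRotate _) := by
      ext i j
      have := DFunLike.congr_fun (hrot j) (v i)
      simpa [Algebra.embeddingsMatrixReindex, Algebra.embeddingsMatrix] using this
    rw [this, Matrix.det_permute', sign_finRotate]
    simp
  have hsq : IsSquare (Algebra.discr F v) ↔ φ D = D := by
    constructor
    · rintro ⟨z, hz⟩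
      rw [hz, map_mul, ← pow_two] at hD2
      rcases sq_eq_sq_iff_eq_or_eq_neg.mp hD2.symm with h | h
      · rw [h]; exact φ.commutes z
      · rw [h, map_neg]; congr 1; exact φ.commutes z
    · intro h
      have : D ∈ Set.range (algebraMap F E) := by
        rw [IsGalois.mem_range_algebraMap_iff_fixed]
        intro f
        obtain ⟨n, hn⟩ := (FiniteField.bijective_frobeniusAlgEquivOfAlgebraic_pow F E).2 f
        rw [← hn]
        have h' : FiniteField.frobeniusAlgEquivOfAlgebraic F E D = D := h
        simp only [AlgEquiv.coe_pow]
        exact Function.IsFixedPt.iterate h' _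
      obtain ⟨z, hz⟩ := this
      refine ⟨z, (algebraMap F E).injective ?_⟩
      rw [hD2, ← hz, map_mul, pow_two]
  rcases Nat.even_or_odd (Module.finrank F E - 1) with ht | ht
  · rw [ht.neg_one_pow] at hφ ⊢
    rw [quadraticChar_one_iff_isSquare hdn, hsq, hφ, one_mul]
  · rw [ht.neg_one_pow] at hφ ⊢
    rw [quadraticChar_neg_one_iff_not_isSquare, hsq, hφ, neg_one_mul]
    intro h
    have h2 : (2 : E) * D = 0 := by linear_combination -h
    rcases mul_eq_zero.mp h2 with h3 | h3
    · exact Ring.two_ne_zero hE h3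
    · exact hD0 h3

theorem aux_trace_count (b : F) :
    ∑ x : E, (if Algebra.trace F E x = b then (1 : ℚ) else 0) =
      (Fintype.card F : ℚ) ^ (Module.finrank F E) / Fintype.card F := by
  have hs := Algebra.trace_surjective F E
  have h1 : ∀ b', ∑ x : E, (if Algebra.trace F E x = b' then (1 : ℚ) else 0) =
      ∑ x : E, (if Algebra.trace F E x = b then (1 : ℚ) else 0) := by
    intro b'
    obtain ⟨z, hz⟩ := hs (b - b')
    rw [← Equiv.sum_comp (Equiv.addRight z)
      (fun x => if Algebra.trace F E x = b then (1 : ℚ) else 0)]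
    refine Finset.sum_congr rfl fun x _ => ?_
    have : Algebra.trace F E (x + z) = b ↔ Algebra.trace F E x = b' := by
      rw [map_add, hz]; constructor <;> intro h <;> linear_combination h
    simp only [Equiv.coe_addRight, this]
  have h2 : ∑ b' : F, ∑ x : E, (if Algebra.trace F E x = b' then (1 : ℚ) else 0) = Fintype.card E := by
    rw [Finset.sum_comm]; simp
  simp only [h1] at h2
  rw [Module.card_eq_pow_finrank (K := F) (V := E)] at h2
  have hq : (Fintype.card F : ℚ) ≠ 0 := by exact_mod_cast Fintype.card_ne_zero
  rw [eq_div_iff hq]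
  simp only [Finset.sum_const, Finset.card_univ, nsmul_eq_mul] at h2
  push_cast at h2
  linear_combination h2


theorem aux_S (hF : ringChar F ≠ 2) (b : F) : ∃ δ : F,
    quadraticChar F δ = (-1) ^ (Module.finrank F E - 1) ∧
    ∑ x : E, (if Algebra.trace F E x = b then (quadraticChar E x : ℚ) else 0) =
      auxE (Module.finrank F E) δ b := by
  have hE : ringChar E ≠ 2 := by
    rwa [← Algebra.ringChar_eq F E]
  have h2 : (2 : F) ≠ 0 := Ring.two_ne_zero hF
  let _ : Invertible (2 : F) := invertibleOfNonzero h2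
  have hsymm : LinearMap.IsSymm (Algebra.traceForm F E) := ⟨fun x y => by
    simp [Algebra.traceForm_apply, mul_comm]⟩
  obtain ⟨v, hv⟩ := LinearMap.BilinForm.exists_orthogonal_basis hsymm
  refine ⟨Algebra.discr F v, aux_disc hF v, ?_⟩
  have hort : ∀ i j, i ≠ j → Algebra.trace F E (v i * v j) = 0 := by
    intro i j hij
    exact hv hij
  have hdisc : Algebra.discr F v = ∏ i, Algebra.trace F E (v i ^ 2) := by
    rw [Algebra.discr_def]
    have : Algebra.traceMatrix F v = Matrix.diagonal (fun i => Algebra.trace F E (v i ^ 2)) := by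
      ext i j
      rw [Algebra.traceMatrix_apply, Algebra.traceForm_apply, Matrix.diagonal_apply]
      split_ifs with hij
      · subst hij; rw [pow_two]
      · exact hort i j hij
    rw [this, Matrix.det_diagonal]
  have hne : ∀ i, Algebra.trace F E (v i ^ 2) ≠ 0 := by
    have := Algebra.discr_not_zero_of_basis F v
    rw [hdisc, Finset.prod_ne_zero_iff] at this
    exact fun i => this i (Finset.mem_univ _)
  have hcount := aux_count_s9 hF _ _ hne b
  rw [← hdisc] at hcount
  have htr : ∀ y : Fin (Module.finrank F E) → F,
      Algebra.trace F E ((v.equivFun.symm y) ^ 2) = ∑ i, Algebra.trace F E (v i ^ 2) * y i ^ 2 := by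
    intro y
    rw [Module.Basis.equivFun_symm_apply, pow_two, Finset.sum_mul_sum, map_sum]
    refine Finset.sum_congr rfl fun i _ => ?_
    rw [map_sum, Finset.sum_eq_single i]
    · rw [smul_mul_smul_comm, map_smul, smul_eq_mul, pow_two, pow_two, mul_comm]
    · intro j _ hj
      rw [smul_mul_smul_comm, map_smul, hort i j hj.symm, smul_zero]
    · simp
  simp only [← htr] at hcount
  have hsum := Equiv.sum_comp v.equivFun.symm.toEquiv
    (fun y : E => if Algebra.trace F E (y ^ 2) = b then (1 : ℚ) else 0)
  have hcount := hsum.symm.trans hcount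
  rw [aux_sq_sum hE (fun x => if Algebra.trace F E x = b then (1 : ℚ) else 0)] at hcount
  simp only [add_mul, one_mul, Finset.sum_add_distrib] at hcount
  rw [aux_trace_count] at hcount
  simpa using hcount

theorem aux_pred (hF : ringChar F ≠ 2) (g : Fˣ) (hg : ∀ u : Fˣ, u ∈ Subgroup.zpowers g)
    (h : ℕ) (hh : h < 2) (z : F) (hz : z ≠ 0) :
    (∃ k : ℕ, z = (g : F) ^ (h + 2 * k)) ↔ quadraticChar F z = (-1) ^ h := by
  have hpow : ∀ u : Fˣ, ∃ j : ℕ, g ^ j = u := by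
    intro u
    have := hg u
    rw [← mem_powers_iff_mem_zpowers] at this
    exact this
  have hgm : quadraticChar F (g : F) = -1 := by
    rcases quadraticChar_dichotomy (Units.ne_zero g) with h1 | h1
    · obtain ⟨u, hu⟩ := quadraticChar_exists_neg_one' hF
      obtain ⟨j, rfl⟩ := hpow u
      rw [Units.val_pow_eq_pow_val, map_pow, h1, one_pow] at hu
      omega
    · exact h1
  constructor
  · rintro ⟨k, rfl⟩
    rw [map_pow, hgm, pow_add, pow_mul]; simp
  · intro hzh
    obtain ⟨j, hj⟩ := hpow (Units.mk0 z hz)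
    have hj' : z = (g : F) ^ j := by
      rw [← Units.val_pow_eq_pow_val, hj]; rfl
    rw [hj', map_pow, hgm] at hzh
    refine ⟨j / 2, ?_⟩
    rw [hj']
    congr 1
    rcases Nat.even_or_odd j with hp | hp
    · rw [hp.neg_one_pow] at hzh
      have : h = 0 := by
        interval_cases h
        · rfl
        · norm_num at hzh
      obtain ⟨w, hw⟩ := hp
      omega
    · rw [hp.neg_one_pow] at hzh
      have : h = 1 := by
        interval_cases h
        · norm_num at hzh
        · rfl
      obtain ⟨w, hw⟩ := hp
      omega
end aux2

theorem aux_transport (p m t : ℕ) [Fact p.Prime] (ht : t ∣ m) (ht0 : 0 < t) (hm : 2 ≤ m)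
    (F K : Type*) [Field F] [Fintype F] [Field K] [Fintype K] [Algebra F K] [CharP F p]
    (hK : Fintype.card K = Fintype.card F ^ m) (g : F) (h : ℕ) (a : F) :
    ∃ (E : Type) (_ : Field E) (_ : Fintype E) (_ : Algebra F E), Module.finrank F E = t ∧
      (NN F K g 2 h t a : ℚ) = ∑ y : E, if (Algebra.trace F E y * ((m / t : ℕ) : F) = a ∧
        ∃ k : ℕ, (Algebra.norm F y) ^ (m / t) = g ^ (h + 2 * k)) then (1 : ℚ) else 0 := by
  have : NeZero t := ⟨ht0.ne'⟩
  let E := FiniteField.Extension F p t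
  let _ : Fintype E := Fintype.ofFinite E
  have hEt : Module.finrank F E = t := FiniteField.finrank_extension F p t
  have hKm : Module.finrank F K = m := by
    have := Module.card_eq_pow_finrank (K := F) (V := K)
    rw [hK] at this
    exact (Nat.pow_right_injective Fintype.one_lt_card this).symm
  refine ⟨E, inferInstance, inferInstance, inferInstance, hEt, ?_⟩
  obtain ⟨f⟩ := FiniteField.nonempty_algHom_of_finrank_dvd (F := F) (K := E) (L := K)
    (by rw [hEt, hKm]; exact ht)
  let _ : Algebra E K := f.toRingHom.toAlgebra
  have : IsScalarTower F E K := IsScalarTower.of_algebraMap_eq (fun x => (f.commutes x).symm)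
  have hn : Module.finrank E K = m / t := by
    have := Module.finrank_mul_finrank F E K
    rw [hEt, hKm] at this
    rw [← this, Nat.mul_div_cancel_left _ ht0]
  have htr : ∀ y : E, Algebra.trace F K (f y) = Algebra.trace F E y * ((m / t : ℕ) : F) := by
    intro y
    have h1 : f y = algebraMap E K y := rfl
    rw [h1, ← Algebra.trace_trace (S := E), Algebra.trace_algebraMap, hn, map_nsmul, nsmul_eq_mul,
      mul_comm]
  have hno : ∀ y : E, Algebra.norm F (f y) = Algebra.norm F y ^ (m / t) := by
    intro y
    have h1 : f y = algebraMap E K y := rfl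
    rw [h1, ← Algebra.norm_norm (S := E), Algebra.norm_algebraMap, hn, map_pow]
  have hcE : Fintype.card E = Fintype.card F ^ t := by
    rw [Module.card_eq_pow_finrank (K := F) (V := E), hEt]
  have hfix : ∀ y : E, (f y) ^ (Fintype.card F) ^ t = f y := by
    intro y
    rw [← map_pow, ← hcE, FiniteField.pow_card]
  have hsurj : ∀ x : K, x ^ (Fintype.card F) ^ t = x → ∃ y, f y = x := by
    intro x hx
    have h1 : 1 < Fintype.card F ^ t := hcE ▸ Fintype.one_lt_card
    have hP0 : (X ^ (Fintype.card F ^ t) - X : K[X]) ≠ 0 :=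
      FiniteField.X_pow_card_sub_X_ne_zero K h1
    have hsub : Finset.univ.image f ⊆ (X ^ (Fintype.card F ^ t) - X : K[X]).roots.toFinset := by
      intro z hz
      obtain ⟨y, _, rfl⟩ := Finset.mem_image.mp hz
      simp [hP0, hfix y]
    have heq := Finset.eq_of_subset_of_card_le hsub (by
      rw [Finset.card_image_of_injective _ (show Function.Injective f from f.toRingHom.injective), Finset.card_univ, hcE]
      refine (Multiset.toFinset_card_le _).trans ((Polynomial.card_roots' _).trans ?_)
      rw [FiniteField.X_pow_card_sub_X_natDegree_eq K h1])
    have : x ∈ Finset.univ.image f := by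
      rw [heq]; simp [hP0, hx]
    simpa using this
  have hcard : NN F K g 2 h t a = Nat.card {y : E // Algebra.trace F E y * ((m / t : ℕ) : F) = a ∧
        ∃ k : ℕ, (Algebra.norm F y) ^ (m / t) = g ^ (h + 2 * k)} := by
    unfold NN
    symm
    refine Nat.card_eq_of_bijective (fun y => ⟨f y.1, hfix _, ?_, ?_⟩) ⟨?_, ?_⟩
    · rw [htr]; exact y.2.1
    · simp only [hno]; exact y.2.2
    · intro y z hyz
      exact Subtype.ext (f.toRingHom.injective (congrArg Subtype.val hyz))
    · rintro ⟨x, hx1, hx2, hx3⟩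
      obtain ⟨y, rfl⟩ := hsurj x hx1
      rw [htr] at hx2
      simp only [hno] at hx3
      exact ⟨⟨y, hx2, hx3⟩, rfl⟩
  rw [hcard, Nat.card_eq_fintype_card, Fintype.card_subtype, Finset.sum_boole]

/-- The values of `N_t` for `s = 2`, `a ≠ 0`, assuming `p ∤ m/t` and `d ∣ h`,
where `d = gcd(m/t, 2)`, `l = gcd(t, 2/d)` and `ρ` is the quadratic character of `F`. -/
theorem stmt9 (p r m h t d l : ℕ) [Fact p.Prime] (hr : 0 < r) (hm : 2 ≤ m)
    (ht : t ∣ m) (ht0 : 0 < t)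
    (F K : Type*) [Field F] [Fintype F] [DecidableEq F] [Field K] [Fintype K] [Algebra F K]
    (hF : Fintype.card F = p ^ r) (hK : Fintype.card K = Fintype.card F ^ m)
    (g : Fˣ) (hg : ∀ u : Fˣ, u ∈ Subgroup.zpowers g)
    (hsq : 2 ∣ Fintype.card F - 1) (hh : h < 2)
    (hd : d = Nat.gcd (m / t) 2) (hl : l = Nat.gcd t (2 / d))
    (hpmt : ¬ p ∣ m / t) (hdh : d ∣ h)
    (a : F) (ha : a ≠ 0) :
    (d = 1 ∧ l = 1 →
      (NN F K (g : F) 2 h t a : ℚ) =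
        (1 / 2) * ((Fintype.card F : ℚ) ^ (t - 1) +
          (-1 : ℚ) ^ h * (Fintype.card F : ℚ) ^ ((t - 1) / 2) *
            (quadraticChar F ((-1 : F) ^ ((t - 1) / 2) * (((m / t : ℕ) : F) * a⁻¹)) : ℚ))) ∧
    (d = 1 ∧ l = 2 →
      (NN F K (g : F) 2 h t a : ℚ) =
        (1 / 2) * ((Fintype.card F : ℚ) ^ (t - 1) +
          (-1 : ℚ) ^ h * (Fintype.card F : ℚ) ^ ((t - 2) / 2) *
            (quadraticChar F ((-1 : F) ^ (t / 2)) : ℚ))) ∧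
    (d = 2 ∧ l = 1 →
      (NN F K (g : F) 2 h t a : ℚ) = (Fintype.card F : ℚ) ^ (t - 1)) := by
  have hc1 := Fintype.one_lt_card (α := F)
  have hring : ringChar F ≠ 2 := by
    intro h2
    have := FiniteField.even_card_of_char_two h2
    omega
  have : CharP F p := by
    obtain ⟨p', hp'⟩ := CharP.exists F
    obtain ⟨n, hpp, hn⟩ := FiniteField.card F p'
    rw [hF] at hn
    have : p = p' := by
      have h1 : p ∣ p' ^ (n : ℕ) := hn ▸ dvd_pow_self p hr.ne'
      exact (Nat.prime_dvd_prime_iff_eq Fact.out hpp).mp (Nat.Prime.dvd_of_dvd_pow Fact.out h1)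
    rwa [this]
  obtain ⟨E, _, _, _, hEt, hNN⟩ := aux_transport p m t ht ht0 hm F K hK (g : F) h a
  set n := m / t with hn
  have hnF : (n : F) ≠ 0 := by
    rw [Ne, CharP.cast_eq_zero_iff F p]; exact hpmt
  set b : F := a * (n : F)⁻¹ with hb
  have hb0 : b ≠ 0 := mul_ne_zero ha (inv_ne_zero hnF)
  have hq : (Fintype.card F : ℚ) ≠ 0 := by exact_mod_cast Fintype.card_ne_zero
  have htb : ∀ z : F, z * (n : F) = a ↔ z = b := by
    intro z; rw [hb, eq_mul_inv_iff_mul_eq₀ hnF]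
  have hne : ∀ y : E, Algebra.trace F E y = b → y ≠ 0 := by
    rintro y hy rfl
    rw [map_zero] at hy
    exact hb0 hy.symm
  have hqt : (Fintype.card F : ℚ) ^ t / Fintype.card F = (Fintype.card F : ℚ) ^ (t - 1) := by
    obtain ⟨t', rfl⟩ : ∃ t', t = t' + 1 := ⟨t - 1, by omega⟩
    rw [pow_succ, mul_div_assoc, div_self hq, mul_one, Nat.add_sub_cancel]
  have hTC := aux_trace_count (E := E) b
  rw [hEt, hqt] at hTC
  obtain ⟨δ, hδ, hS⟩ := aux_S (E := E) hring b
  rw [hEt] at hδ hS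
  have hmain : Odd n → (NN F K (g : F) 2 h t a : ℚ) =
        (1 / 2) * ((Fintype.card F : ℚ) ^ (t - 1) + (-1 : ℚ) ^ h * auxE t δ b) := by
    intro hodd
    rw [hNN, ← hTC, ← hS, Finset.mul_sum, ← Finset.sum_add_distrib, Finset.mul_sum]
    refine Finset.sum_congr rfl fun y _ => ?_
    rw [htb]
    by_cases hy : Algebra.trace F E y = b
    · have hy0 := hne y hy
      have hN : Algebra.norm F y ≠ 0 := Algebra.norm_ne_zero_iff.mpr hy0
      rw [aux_pred hring g hg h hh _ (pow_ne_zero _ hN), map_pow, aux_norm hring]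
      simp only [hy, true_and, if_true]
      rcases quadraticChar_dichotomy hy0 with h1 | h1 <;> rw [h1] <;>
        interval_cases h <;> norm_num [hodd.neg_one_pow]
    · simp [hy]
  refine ⟨?_, ?_, ?_⟩
  · rintro ⟨rfl, rfl⟩
    have hodd : Odd n := by
      rw [← Nat.coprime_two_right]; exact hd.symm
    have htodd : Odd t := by
      rw [← Nat.coprime_two_right]; exact hl.symm
    rw [hmain hodd]
    have hte : Even (t - 1) := by
      obtain ⟨w, hw⟩ := htodd; exact ⟨w, by omega⟩
    have ht2 : (t - 1) / 2 = t / 2 := by obtain ⟨w, hw⟩ := htodd; omega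
    rw [hte.neg_one_pow] at hδ
    rw [auxE, if_neg (Nat.not_even_iff_odd.mpr htodd), ht2]
    have hbn : quadraticChar F ((n : F) * a⁻¹) = quadraticChar F b := by
      have h1 : (n : F) * a⁻¹ = b * ((n : F) * a⁻¹) ^ 2 := by
        rw [hb]; field_simp
      rw [h1, map_mul, quadraticChar_sq_one' (mul_ne_zero hnF (inv_ne_zero ha)), mul_one]
    clear_value b
    rw [map_mul _ _ b, map_mul _ _ δ, map_mul _ _ ((n : F) * a⁻¹), hδ, hbn]
    push_cast
    ring
  · rintro ⟨rfl, rfl⟩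
    have hodd : Odd n := by
      rw [← Nat.coprime_two_right]; exact hd.symm
    have hteven : Even t := by
      rw [even_iff_two_dvd]; 
      have := Nat.gcd_dvd_left t (2 / 1)
      rwa [← hl] at this
    rw [hmain hodd]
    have hto : Odd (t - 1) := by
      obtain ⟨w, hw⟩ := hteven; exact ⟨w - 1, by omega⟩
    rw [hto.neg_one_pow] at hδ
    rw [auxE, if_pos hteven, if_neg hb0, map_mul, hδ]
    obtain ⟨w, hw⟩ : ∃ w, t / 2 = w + 1 := ⟨t / 2 - 1, by obtain ⟨w, hw⟩ := hteven; omega⟩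
    rw [show (t - 2) / 2 = w by omega, hw, pow_succ (Fintype.card F : ℚ) w]
    push_cast
    field_simp
    ring
  · rintro ⟨rfl, rfl⟩
    have heven : Even n := by
      rw [even_iff_two_dvd]
      have := Nat.gcd_dvd_left n 2
      rwa [← hd] at this
    have hh0 : h = 0 := by omega
    subst hh0
    rw [hNN, ← hTC]
    refine Finset.sum_congr rfl fun y _ => ?_
    rw [htb]
    by_cases hy : Algebra.trace F E y = b
    · have hy0 := hne y hy
      have hN : Algebra.norm F y ≠ 0 := Algebra.norm_ne_zero_iff.mpr hy0
      rw [aux_pred hring g hg 0 hh _ (pow_ne_zero _ hN), map_pow, aux_norm hring]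
      rcases quadraticChar_dichotomy hy0 with h1 | h1 <;> rw [h1] <;>
        simp [hy, heven.neg_one_pow]
    · simp [hy]

end
end
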